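/- arXiv:math/9707203 — 9 statements merged into one kernel-verified Lean document; each statement's English description precedes it below -/
import Mathlib

section
/- If L is an infinite lattice that is order polynomially complete, then the cardinality of L is a strongly inaccessible cardinal (i.e., |L| is uncountable, regular, and a strong limit cardinal). -/
universe u v w

open Cardinal

/-- A well-ordered chain: a chain whose induced strict order is well-founded. -/
def IsWellChain {L : Type u} [PartialOrder L] (A : Set L) : Prop :=
  IsChain (· ≤ ·) A ∧ A.WellFoundedOn (· < ·)

/-- A co-well-ordered chain: a chain well-ordered under the reverse order. -/
def IsCoWellChain {L : Type u} [PartialOrder L] (A : Set L) : Prop :=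
  IsChain (· ≤ ·) A ∧ A.WellFoundedOn (· > ·)

/-- A subset of a partial order is uniform if it is an antichain, a well-ordered chain,
or a co-well-ordered chain. -/
def IsUniform {L : Type u} [PartialOrder L] (A : Set L) : Prop :=
  IsAntichain (· ≤ ·) A ∨ IsWellChain A ∨ IsCoWellChain A

/-- `mu L` is the least cardinal `m` such that `L` has no uniform subset of cardinality `m`. -/
noncomputable def mu (L : Type u) [PartialOrder L] : Cardinal.{u} :=
  sInf {m : Cardinal.{u} | ¬ ∃ A : Set L, IsUniform A ∧ #A = m}

/-- `nu2 L₁ L₂` is the least cardinal `n` such that there is no family of `n` pairwise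
incomparable monotone functions from `L₁` to `L₂` (functions ordered pointwise). -/
noncomputable def nu2 (L₁ : Type u) (L₂ : Type v) [PartialOrder L₁] [PartialOrder L₂] :
    Cardinal.{max u v} :=
  sInf {n : Cardinal.{max u v} |
    ¬ ∃ S : Set (L₁ → L₂), (∀ f ∈ S, Monotone f) ∧ IsAntichain (· ≤ ·) S ∧ #S = n}

/-- `nu L = nu2 L L`. -/
noncomputable def nu (L : Type u) [PartialOrder L] : Cardinal.{u} := nu2 L L

/-- `muInf L = sup_{n} mu (Lⁿ)` for `n ≥ 1`. -/
noncomputable def muInf (L : Type u) [PartialOrder L] : Cardinal.{u} :=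
  ⨆ n : ℕ, mu (Fin (n + 1) → L)

/-- `nuInf L = sup_{n} nu (Lⁿ, L)` for `n ≥ 1`. -/
noncomputable def nuInf (L : Type u) [PartialOrder L] : Cardinal.{u} :=
  ⨆ n : ℕ, nu2 (Fin (n + 1) → L) L

/-- A function `(Fin n → L) → L` is a polynomial function if it lies in the smallest
sublattice of the function lattice containing all coordinate projections and all
constant functions. -/
def IsPolynomialFn (L : Type u) [Lattice L] (n : ℕ) (f : (Fin n → L) → L) : Prop :=
  f ∈ latticeClosure ({g : (Fin n → L) → L | ∃ i : Fin n, g = fun x => x i} ∪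
    {g : (Fin n → L) → L | ∃ c : L, g = fun _ => c})

/-- A lattice is order polynomially complete if for every `n ≥ 1` every monotone
`n`-ary function is a polynomial function. -/
def OPC (L : Type u) [Lattice L] : Prop :=
  ∀ n : ℕ, 1 ≤ n → ∀ f : (Fin n → L) → L, Monotone f → IsPolynomialFn L n f

/-- The three possible comparison types between distinct blocks of a canonical family. -/
inductive CompType : Type
  | lt
  | gt
  | incomp

/-- The relation on `L` associated to a comparison type. -/
def CompType.rel {L : Type u} [PartialOrder L] : CompType → L → L → Prop
  | .lt, a, b => a < b
  | .gt, a, b => b < a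
  | .incomp, a, b => ¬ a ≤ b ∧ ¬ b ≤ a

/-- A family of subsets of `L` is canonical if each member is uniform, all members are
of the same type, and comparison between elements of distinct members depends only on
the pair of indices. -/
def IsCanonical {L : Type u} [PartialOrder L] {ι : Type v} (A : ι → Set L) : Prop :=
  ((∀ i, IsAntichain (· ≤ ·) (A i)) ∨ (∀ i, IsWellChain (A i)) ∨ (∀ i, IsCoWellChain (A i))) ∧
  ∃ F : ι → ι → CompType, ∀ i j, i ≠ j → ∀ a ∈ A i, ∀ b ∈ A j, (F i j).rel a b



section PartA

open Set

/-- A monotone function which is nowhere below the identity, in a lattice without top. -/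
theorem opcaux_exists_mono {L : Type u} [Lattice L] (h : ¬ ∃ t : L, IsTop t) :
    ∃ f : L → L, Monotone f ∧ ∀ x, ¬ f x ≤ x := by
  classical
  let C : Set L := maxChain (· ≤ ·)
  have hC : IsMaxChain (· ≤ ·) C := maxChain_spec
  have hch : ∀ a ∈ C, ∀ b ∈ C, a ≤ b ∨ b ≤ a := fun a ha b hb => hC.1.total ha hb
  have hunb : ∀ x : L, ∃ c ∈ C, ¬ c ≤ x := by
    intro x
    by_contra! hx
    apply h
    refine ⟨x, fun y => ?_⟩
    have h1 : IsChain (· ≤ ·) (insert (x ⊔ y) C) :=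
      hC.1.insert fun b hb _ => Or.inr ((hx b hb).trans le_sup_left)
    have h2 := hC.2 h1 (subset_insert _ _)
    have h3 : x ⊔ y ∈ C := by rw [h2]; exact mem_insert _ _
    exact le_sup_right.trans (hx _ h3)
  have wf : WellFounded (WellOrderingRel : L → L → Prop) := IsWellFounded.wf
  have hne : ∀ x : L, ({c | c ∈ C ∧ ¬ c ≤ x} : Set L).Nonempty := fun x => by
    obtain ⟨c, hc⟩ := hunb x
    exact ⟨c, hc⟩
  let f : L → L := fun x => wf.min _ (hne x)
  have hf : ∀ x, f x ∈ C ∧ ¬ f x ≤ x := fun x => wf.min_mem _ (hne x)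
  have hmin : ∀ x, ∀ c ∈ C, WellOrderingRel c (f x) → c ≤ x := by
    intro x c hc hr
    by_contra hcx
    exact wf.not_lt_min {c | c ∈ C ∧ ¬ c ≤ x} (show c ∈ {c | c ∈ C ∧ ¬ c ≤ x} from ⟨hc, hcx⟩) hr
  refine ⟨f, ?_, fun x => (hf x).2⟩
  intro x y hxy
  rcases trichotomous_of (WellOrderingRel : L → L → Prop) (f x) (f y) with h1 | h1 | h1
  · have := hmin y _ (hf x).1 h1
    rcases hch _ (hf x).1 _ (hf y).1 with h2 | h2
    · exact h2
    · exact absurd (h2.trans this) (hf y).2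
  · exact h1.le
  · exact absurd ((hmin x _ (hf y).1 h1).trans hxy) (hf y).2

theorem opcaux_poly_ev {L : Type u} [Lattice L] [Nonempty L] (f : (Fin 1 → L) → L)
    (hf : IsPolynomialFn L 1 f) :
    ∃ M : L, (∃ a ≤ M, ∀ x, M ≤ x → f (fun _ => x) = a) ∨ (∀ x, M ≤ x → f (fun _ => x) = x) := by
  refine latticeClosure_min (t := {f : (Fin 1 → L) → L | ∃ M : L,
    (∃ a ≤ M, ∀ x, M ≤ x → f (fun _ => x) = a) ∨ (∀ x, M ≤ x → f (fun _ => x) = x)}) ?_ ?_ hf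
  · rintro g (⟨i, rfl⟩ | ⟨c, rfl⟩)
    · exact ⟨Classical.arbitrary L, Or.inr fun x _ => rfl⟩
    · exact ⟨c, Or.inl ⟨c, le_rfl, fun x _ => rfl⟩⟩
  · constructor
    · rintro g ⟨M, hM⟩ k ⟨N, hN⟩
      refine ⟨M ⊔ N, ?_⟩
      rcases hM with ⟨a, ha, hM⟩ | hM <;> rcases hN with ⟨b, hb, hN⟩ | hN
      · refine Or.inl ⟨a ⊔ b, sup_le_sup ha hb, fun x hx => ?_⟩
        simp [hM x (le_sup_left.trans hx), hN x (le_sup_right.trans hx)]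
      · refine Or.inr fun x hx => ?_
        simp [hM x (le_sup_left.trans hx), hN x (le_sup_right.trans hx),
          ha.trans (le_sup_left.trans hx)]
      · refine Or.inr fun x hx => ?_
        simp [hM x (le_sup_left.trans hx), hN x (le_sup_right.trans hx),
          hb.trans (le_sup_right.trans hx)]
      · refine Or.inr fun x hx => ?_
        simp [hM x (le_sup_left.trans hx), hN x (le_sup_right.trans hx)]
    · rintro g ⟨M, hM⟩ k ⟨N, hN⟩
      refine ⟨M ⊔ N, ?_⟩
      rcases hM with ⟨a, ha, hM⟩ | hM <;> rcases hN with ⟨b, hb, hN⟩ | hN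
      · refine Or.inl ⟨a ⊓ b, inf_le_left.trans (ha.trans le_sup_left), fun x hx => ?_⟩
        simp [hM x (le_sup_left.trans hx), hN x (le_sup_right.trans hx)]
      · refine Or.inl ⟨a, ha.trans le_sup_left, fun x hx => ?_⟩
        simp [hM x (le_sup_left.trans hx), hN x (le_sup_right.trans hx),
          ha.trans (le_sup_left.trans hx)]
      · refine Or.inl ⟨b, hb.trans le_sup_right, fun x hx => ?_⟩
        simp [hM x (le_sup_left.trans hx), hN x (le_sup_right.trans hx),
          hb.trans (le_sup_right.trans hx)]
      · refine Or.inr fun x hx => ?_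
        simp [hM x (le_sup_left.trans hx), hN x (le_sup_right.trans hx)]

theorem opcaux_top {L : Type u} [Lattice L] [Nonempty L] (h : OPC L) : ∃ t : L, IsTop t := by
  by_contra hn
  obtain ⟨f, hf, hx⟩ := opcaux_exists_mono hn
  obtain ⟨M, ⟨a, ha, hM⟩ | hM⟩ := opcaux_poly_ev (fun x : Fin 1 → L => f (x 0))
    (h 1 le_rfl _ fun x y hxy => hf (hxy 0))
  · have h1 := hM (M ⊔ a) le_sup_left
    have h2 := hx (M ⊔ a)
    simp only at h1
    rw [h1] at h2
    exact h2 le_sup_right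
  · exact hx M (hM M le_rfl).le

theorem opcaux_dual {L : Type u} [Lattice L] (h : OPC L) : OPC Lᵒᵈ := by
  intro n hn f hf
  have h1 : IsPolynomialFn L n (fun x => OrderDual.ofDual (f (fun i => OrderDual.toDual (x i)))) :=
    h n hn _ fun x y hxy => hf (fun i => hxy i)
  have hproj : ∀ i, IsPolynomialFn Lᵒᵈ n (fun x => x i) :=
    fun i => subset_latticeClosure (Or.inl ⟨i, rfl⟩)
  have hconst : ∀ c, IsPolynomialFn Lᵒᵈ n (fun _ => c) :=
    fun c => subset_latticeClosure (Or.inr ⟨c, rfl⟩)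
  have hsup : ∀ p q, IsPolynomialFn Lᵒᵈ n p → IsPolynomialFn Lᵒᵈ n q →
      IsPolynomialFn Lᵒᵈ n (fun x => p x ⊔ q x) :=
    fun p q hp hq => isSublattice_latticeClosure.1 hp hq
  have hinf : ∀ p q, IsPolynomialFn Lᵒᵈ n p → IsPolynomialFn Lᵒᵈ n q →
      IsPolynomialFn Lᵒᵈ n (fun x => p x ⊓ q x) :=
    fun p q hp hq => isSublattice_latticeClosure.2 hp hq
  have key : ∀ g : (Fin n → L) → L, IsPolynomialFn L n g →
      IsPolynomialFn Lᵒᵈ n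
        (fun x => OrderDual.toDual (g (fun i => OrderDual.ofDual (x i)))) := by
    intro g hg
    refine latticeClosure_min (t := {g : (Fin n → L) → L | IsPolynomialFn Lᵒᵈ n
        (fun x => OrderDual.toDual (g (fun i => OrderDual.ofDual (x i))))}) ?_ ?_ hg
    · rintro g (⟨i, rfl⟩ | ⟨c, rfl⟩)
      · exact hproj i
      · exact hconst (OrderDual.toDual c)
    · constructor
      · intro a ha b hb
        exact hinf _ _ ha hb
      · intro a ha b hb
        exact hsup _ _ ha hb
  exact key _ h1

end PartA

section PartB

open Set

/-- Term skeletons for lattice polynomials, with anonymous parameters. -/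
inductive OpcTm (n : ℕ) : Type
  | var (i : Fin n) : OpcTm n
  | par : OpcTm n
  | sup (s t : OpcTm n) : OpcTm n
  | inf (s t : OpcTm n) : OpcTm n

/-- A numerical code of a term. -/
def OpcTm.code {n : ℕ} : OpcTm n → ℕ
  | .var i => Nat.pair 0 i
  | .par => Nat.pair 1 0
  | .sup s t => Nat.pair 2 (Nat.pair s.code t.code)
  | .inf s t => Nat.pair 3 (Nat.pair s.code t.code)

theorem OpcTm.code_injective {n : ℕ} : Function.Injective (OpcTm.code (n := n)) := by
  intro s
  induction s with
  | var i => intro t h; cases t <;> simp_all [OpcTm.code, Nat.pair_eq_pair, Fin.ext_iff]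
  | par => intro t h; cases t <;> simp_all [OpcTm.code, Nat.pair_eq_pair]
  | sup a b ha hb =>
    intro t h
    cases t <;> simp [OpcTm.code, Nat.pair_eq_pair] at h
    rw [ha h.1, hb h.2]
  | inf a b ha hb =>
    intro t h
    cases t <;> simp [OpcTm.code, Nat.pair_eq_pair] at h
    rw [ha h.1, hb h.2]

instance OpcTm.countable_inst {n : ℕ} : Countable (OpcTm n) :=
  OpcTm.code_injective.countable

/-- Evaluation of a term: the parameter sequence is split into even and odd parts. -/
def OpcTm.eval {L : Type u} [Lattice L] {n : ℕ} : OpcTm n → (ℕ → L) → (Fin n → L) → L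
  | .var i, _, x => x i
  | .par, c, _ => c 0
  | .sup s t, c, x => s.eval (fun k => c (2 * k)) x ⊔ t.eval (fun k => c (2 * k + 1)) x
  | .inf s t, c, x => s.eval (fun k => c (2 * k)) x ⊓ t.eval (fun k => c (2 * k + 1)) x

theorem OpcTm.eval_mono {L : Type u} [Lattice L] {n : ℕ} (t : OpcTm n) (c d : ℕ → L)
    (h : c ≤ d) (x : Fin n → L) : t.eval c x ≤ t.eval d x := by
  induction t generalizing c d with
  | var i => exact le_rfl
  | par => exact h 0
  | sup s t hs ht => exact sup_le_sup (hs _ _ fun k => h _) (ht _ _ fun k => h _)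
  | inf s t hs ht => exact inf_le_inf (hs _ _ fun k => h _) (ht _ _ fun k => h _)

theorem opcaux_interleave {L : Type u} (d : L) (c₁ c₂ : ℕ → L) (N₁ N₂ : ℕ)
    (h₁ : ∀ k, N₁ ≤ k → c₁ k = d) (h₂ : ∀ k, N₂ ≤ k → c₂ k = d) :
    ∃ c : ℕ → L, ∃ N, (∀ k, N ≤ k → c k = d) ∧ (fun k => c (2 * k)) = c₁ ∧
      (fun k => c (2 * k + 1)) = c₂ := by
  refine ⟨fun k => if k % 2 = 0 then c₁ (k / 2) else c₂ (k / 2), 2 * (N₁ + N₂) + 2, ?_, ?_, ?_⟩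
  · intro k hk
    dsimp only
    split_ifs
    · exact h₁ _ (by omega)
    · exact h₂ _ (by omega)
  · funext k
    simp
  · funext k
    have h1 : (2 * k + 1) % 2 = 1 := by omega
    have h2 : (2 * k + 1) / 2 = k := by omega
    simp [h1, h2]

theorem opcaux_poly_rep {L : Type u} [Lattice L] (d : L) {n : ℕ} (f : (Fin n → L) → L)
    (hf : IsPolynomialFn L n f) :
    ∃ (t : OpcTm n) (c : ℕ → L) (N : ℕ), (∀ k, N ≤ k → c k = d) ∧ f = t.eval c := by
  refine latticeClosure_min (t := {f : (Fin n → L) → L | ∃ (t : OpcTm n) (c : ℕ → L) (N : ℕ),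
    (∀ k, N ≤ k → c k = d) ∧ f = t.eval c}) ?_ ?_ hf
  · rintro g (⟨i, rfl⟩ | ⟨a, rfl⟩)
    · exact ⟨.var i, fun _ => d, 0, fun _ _ => rfl, rfl⟩
    · refine ⟨.par, fun k => if k = 0 then a else d, 1, fun k hk => ?_, ?_⟩
      · simp [show k ≠ 0 by omega]
      · funext x
        simp [OpcTm.eval]
  · constructor
    · rintro f ⟨s, c₁, N₁, h₁, rfl⟩ g ⟨t, c₂, N₂, h₂, rfl⟩
      obtain ⟨c, N, hN, e₁, e₂⟩ := opcaux_interleave d c₁ c₂ N₁ N₂ h₁ h₂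
      refine ⟨.sup s t, c, N, hN, ?_⟩
      funext x
      simp only [OpcTm.eval, e₁, e₂, Pi.sup_apply]
    · rintro f ⟨s, c₁, N₁, h₁, rfl⟩ g ⟨t, c₂, N₂, h₂, rfl⟩
      obtain ⟨c, N, hN, e₁, e₂⟩ := opcaux_interleave d c₁ c₂ N₁ N₂ h₁ h₂
      refine ⟨.inf s t, c, N, hN, ?_⟩
      funext x
      simp only [OpcTm.eval, e₁, e₂, Pi.inf_apply]

/-- A family, indexed by `ι`, of pairwise incomparable monotone functions. -/
def OpcFam (P : Type v) (L : Type u) [PartialOrder P] [PartialOrder L] (ι : Type w) : Prop :=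
  ∃ F : ι → P → L, (∀ i, Monotone (F i)) ∧ ∀ i j, F i ≤ F j → i = j

/-- Some finite power of `L` has an antichain of size `m`. -/
def OpcAC (L : Type u) [PartialOrder L] (m : Cardinal.{u}) : Prop :=
  ∃ (ι : Type u) (n : ℕ) (a : ι → Fin (n + 1) → L), #ι = m ∧ ∀ i j, a i ≤ a j → i = j

theorem OpcAC.mono {L : Type u} [PartialOrder L] {m k : Cardinal.{u}} (h : OpcAC L m)
    (hk : k ≤ m) : OpcAC L k := by
  obtain ⟨ι, n, a, rfl, ha⟩ := h
  obtain ⟨s, hs⟩ := le_mk_iff_exists_set.1 hk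
  exact ⟨s, n, fun i => a i, hs, fun i j hij => Subtype.ext (ha _ _ hij)⟩

theorem OpcFam.comp {P : Type v} {L : Type u} [PartialOrder P] [PartialOrder L] {ι : Type w}
    {ι' : Type*} (h : OpcFam P L ι) (e : ι' → ι) (he : Function.Injective e) : OpcFam P L ι' := by
  obtain ⟨F, hF, hi⟩ := h
  exact ⟨fun i => F (e i), fun i => hF _, fun i j hij => he (hi _ _ hij)⟩

/-- Incomparable monotone functions yield antichains of parameters. -/
theorem opcaux_key {L : Type u} [Lattice L] [Nonempty L] (h : OPC L) {n : ℕ} {K : Type u}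
    [Infinite K] (hF : OpcFam (Fin (n + 1) → L) L (Set K)) : OpcAC L (2 ^ #K) := by
  obtain ⟨F, hF, hi⟩ := hF
  let d : L := Classical.arbitrary L
  have hrep := fun S => opcaux_poly_rep d (F S) (h (n + 1) (by omega) _ (hF S))
  choose t c N hN he using hrep
  have hcard : #(Set K) = 2 ^ #K := mk_set
  have hinf : ℵ₀ ≤ #K := aleph0_le_mk K
  let q : Set K → ULift.{u} (OpcTm (n + 1) × ℕ) := fun S => ⟨(t S, N S)⟩
  obtain ⟨p, hp⟩ := infinite_pigeonhole q (by rw [hcard]; exact hinf.trans (cantor _).le) (by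
    rw [hcard]
    exact lt_of_le_of_lt (mk_le_aleph0) (hinf.trans_lt (lt_cof_ord_power hinf one_lt_two)))
  refine ⟨q ⁻¹' {p}, p.down.2, fun S i => c S i, by rw [hp, hcard], ?_⟩
  rintro ⟨S, hS⟩ ⟨T, hT⟩ hST
  apply Subtype.ext
  apply hi
  have e : q S = q T := hS.trans hT.symm
  have e' : (t S, N S) = (t T, N T) := congrArg ULift.down e
  have hS' : (t S, N S) = p.down := congrArg ULift.down hS
  have ht : t S = t T := congrArg Prod.fst e'
  have hNS : N S = p.down.2 := congrArg Prod.snd hS'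
  have hNT : N T = p.down.2 := (congrArg Prod.snd e').symm.trans hNS
  intro x
  rw [he S, he T, ht]
  apply OpcTm.eval_mono
  intro k
  by_cases hk : k < p.down.2 + 1
  · exact hST ⟨k, hk⟩
  · rw [hN S k (by omega), hN T k (by omega)]

/-- From set-inclusion reflecting families to incomparable families. -/
theorem opcaux_twist {P : Type v} {L : Type u} [PartialOrder P] [PartialOrder L] {K : Type w}
    [Infinite K] (F : Set K → P → L) (hF : ∀ S, Monotone (F S))
    (hi : ∀ S T, F S ≤ F T → S ⊆ T) : OpcFam P L (Set K) := by
  classical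
  have hc : #(K × Bool) = #K := by
    rw [mk_prod]
    simp
    exact mul_eq_left (aleph0_le_mk K) ((natCast_lt_aleph0 (n := 2)).le.trans (aleph0_le_mk K)) two_ne_zero
  obtain ⟨e⟩ := Cardinal.eq.1 hc
  let G : Set K → Set K := fun S => {k | (e.symm k).2 = true ↔ (e.symm k).1 ∈ S}
  refine ⟨fun S => F (G S), fun S => hF _, fun S T hST => ?_⟩
  have h1 := hi _ _ hST
  ext k
  constructor
  · intro hk
    have : e (k, true) ∈ G S := by simp [G, hk]
    simpa [G] using h1 this
  · intro hk
    by_contra hk'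
    have : e (k, false) ∈ G S := by simp [G, hk']
    have := h1 this
    simp [G] at this
    exact this hk

theorem opcaux_of_antichain {P : Type v} {L : Type u} [PartialOrder P] [PartialOrder L]
    [BoundedOrder L] [Nontrivial L] {K : Type w} [Infinite K] (a : K → P)
    (ha : ∀ i j, a i ≤ a j → i = j) : OpcFam P L (Set K) := by
  classical
  refine opcaux_twist (fun S x => if ∃ k ∈ S, a k ≤ x then ⊤ else ⊥) ?_ ?_
  · intro S x y hxy
    dsimp only
    split_ifs with h1 h2 h2
    · exact le_rfl
    · obtain ⟨k, hk, hkx⟩ := h1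
      exact absurd ⟨k, hk, hkx.trans hxy⟩ h2
    · exact bot_le
    · exact le_rfl
  · intro S T hST k hk
    have h1 := hST (a k)
    dsimp only at h1
    rw [if_pos ⟨k, hk, le_rfl⟩] at h1
    by_cases h2 : ∃ j ∈ T, a j ≤ a k
    · obtain ⟨j, hj, hjk⟩ := h2
      rwa [← ha _ _ hjk]
    · rw [if_neg h2] at h1
      exact absurd (le_antisymm h1 bot_le) top_ne_bot

theorem opcaux_of_chain {L : Type u} [PartialOrder L] [OrderTop L] {I : Type w} [LinearOrder I]
    [WellFoundedLT I] [NoMaxOrder I] [Infinite I] (c : I → L) (hc : StrictMono c) :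
    OpcFam L L (Set I) := by
  classical
  let _ : SuccOrder I := SuccOrder.ofLinearWellFoundedLT I
  let g : Set I → I → L := fun S i => if i ∈ S then c (Order.succ i) else c i
  have hg1 : ∀ S i, c i ≤ g S i := by
    intro S i
    simp only [g]
    split_ifs
    · exact hc.monotone (Order.le_succ i)
    · exact le_rfl
  have hg2 : ∀ S i, g S i ≤ c (Order.succ i) := by
    intro S i
    simp only [g]
    split_ifs
    · exact le_rfl
    · exact hc.monotone (Order.le_succ i)
  have hg : ∀ S, Monotone (g S) := by
    intro S i j hij
    rcases hij.eq_or_lt with rfl | h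
    · exact le_rfl
    · exact (hg2 S i).trans ((hc.monotone (Order.succ_le_of_lt h)).trans (hg1 S j))
  have wf : WellFounded ((· < ·) : I → I → Prop) := wellFounded_lt
  let F : Set I → L → L := fun S x =>
    if h : ({i | x ≤ c i} : Set I).Nonempty then g S (wf.min _ h) else ⊤
  refine opcaux_twist F ?_ ?_
  · intro S x y hxy
    simp only [F]
    split_ifs with h1 h2 h2
    · apply hg
      by_contra! hlt
      exact wf.not_lt_min {i | x ≤ c i} (hxy.trans (wf.min_mem _ h2)) hlt
    · exact le_top
    · obtain ⟨i, hi⟩ := h2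
      exact absurd ⟨i, hxy.trans hi⟩ h1
    · exact le_rfl
  · have hFc : ∀ S i, F S (c i) = g S i := by
      intro S i
      have hne : ({j | c i ≤ c j} : Set I).Nonempty := ⟨i, le_rfl⟩
      have hm : wf.min _ hne = i := by
        apply le_antisymm
        · by_contra! hlt
          exact wf.not_lt_min {j | c i ≤ c j} (show i ∈ {j | c i ≤ c j} from le_rfl) hlt
        · exact hc.le_iff_le.1 (wf.min_mem _ hne)
      simp only [F]
      rw [dif_pos hne, hm]
    intro S T hST i hi
    by_contra hiT
    have h1 := hST (c i)
    rw [hFc, hFc] at h1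
    simp only [g, if_pos hi, if_neg hiT] at h1
    exact absurd (hc (Order.lt_succ i)) h1.not_gt

theorem opcaux_of_cochain {L : Type u} [PartialOrder L] [OrderBot L] {I : Type w} [LinearOrder I]
    [WellFoundedLT I] [NoMaxOrder I] [Infinite I] (c : I → L) (hc : StrictAnti c) :
    OpcFam L L (Set I) := by
  have hc' : StrictMono (OrderDual.toDual ∘ c) := fun i j hij => OrderDual.toDual_lt_toDual.2 (hc hij)
  have hfam : OpcFam Lᵒᵈ Lᵒᵈ (Set I) := opcaux_of_chain _ hc'
  obtain ⟨F, hF, hi⟩ := hfam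
  exact ⟨fun S x => F S x, fun S x y hxy => hF S hxy, fun S T hST => (hi T S hST).symm⟩

/-- Glue families along an antichain. -/
theorem opcaux_glue {L : Type u} [PartialOrder L] [BoundedOrder L] {n : ℕ} {ι : Type v}
    (a : ι → Fin (n + 1) → L) (ha : ∀ i j, a i ≤ a j → i = j) (K : ι → Type w)
    (hK : ∀ i, OpcFam L L (Set (K i))) :
    OpcFam (Fin (n + 1 + 1) → L) L (Set (Σ i, K i)) := by
  classical
  choose F hF hi using hK
  let b : (Fin (n + 1 + 1) → L) → Fin (n + 1) → L := fun z i => z i.castSucc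
  have hb : Monotone b := fun x y hxy i => hxy _
  let G : Set (Σ i, K i) → (Fin (n + 1 + 1) → L) → L := fun S z =>
    if ∃ i, a i < b z then ⊤ else
      if h : ∃ i, a i = b z then F h.choose {k | (⟨h.choose, k⟩ : Σ i, K i) ∈ S} (z (Fin.last _))
      else ⊥
  have hG : ∀ S i x, G S (Fin.snoc (α := fun _ => L) (a i) x) = F i {k | (⟨i, k⟩ : Σ i, K i) ∈ S} x := by
    intro S i x
    have e : b (Fin.snoc (α := fun _ => L) (a i) x) = a i := by
      funext j
      simp [b]
    have hex : ∃ j, a j = b (Fin.snoc (α := fun _ => L) (a i) x) := ⟨i, e.symm⟩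
    have hn : ¬ ∃ j, a j < b (Fin.snoc (α := fun _ => L) (a i) x) := by
      rintro ⟨j, hj⟩
      rw [e] at hj
      have := ha _ _ hj.le
      subst this
      exact lt_irrefl _ hj
    have hch : hex.choose = i := ha _ _ (hex.choose_spec.trans e).le
    simp only [G]
    rw [if_neg hn, dif_pos hex, Fin.snoc_last, hch]
  refine ⟨G, ?_, ?_⟩
  · intro S z w hzw
    rcases (hb hzw).eq_or_lt with e | hlt
    · simp only [G]
      rw [← e]
      split_ifs with h1 h2
      · exact le_rfl
      · exact hF _ _ (hzw _)
      · exact le_rfl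
    · by_cases h1 : ∃ i, a i ≤ b z
      · obtain ⟨i, hi⟩ := h1
        have : ∃ i, a i < b w := ⟨i, hi.trans_lt hlt⟩
        simp only [G]
        rw [if_pos this]
        exact le_top
      · simp only [G]
        rw [if_neg fun ⟨i, hi⟩ => h1 ⟨i, hi.le⟩, dif_neg fun ⟨i, hi⟩ => h1 ⟨i, hi.le⟩]
        exact bot_le
  · intro S T hST
    ext ⟨i, k⟩
    have h1 : F i {k | (⟨i, k⟩ : Σ i, K i) ∈ S} ≤ F i {k | (⟨i, k⟩ : Σ i, K i) ∈ T} := by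
      intro x
      rw [← hG, ← hG]
      exact hST _
    have h2 := hi i _ _ h1
    exact Set.ext_iff.1 h2 k

end PartB

section PartC

open Set

theorem opcaux_min_congr {P : Type u} {r : P → P → Prop} (wf : WellFounded r) {s t : Set P}
    (hs : s.Nonempty) (ht : t.Nonempty) (h : s = t) : wf.min s hs = wf.min t ht := by
  subst h
  rfl

/-- A form of the Erdős–Rado theorem for partial orders. -/
theorem opcaux_er {P : Type u} [PartialOrder P] {m l : Cardinal.{u}} (hm : m.IsRegular)
    (hml : m ≤ l) (h2 : ∀ k < m, (2 : Cardinal.{u}) ^ k ≤ l) (hl : l < #P) :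
    ∃ (e : m.ord.ToType → P) (H : Set m.ord.ToType), #H = m ∧
      (StrictMonoOn e H ∨ StrictAntiOn e H ∨ ∀ i ∈ H, ∀ j ∈ H, e i ≤ e j → i = j) := by
  classical
  let I := m.ord.ToType
  have hI : #I = m := by simp [I]
  have hl0 : ℵ₀ ≤ l := hm.aleph0_le.trans hml
  have wfP : WellFounded (WellOrderingRel : P → P → Prop) := IsWellFounded.wf
  have wfI : WellFounded ((· < ·) : I → I → Prop) := wellFounded_lt
  let col : P → P → Prop × Prop := fun y x => (y ≤ x, x ≤ y)
  let e : P → I → P := fun x => wfI.fix fun i prev =>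
    wfP.min {y | ∀ j (h : j < i), col (prev j h) y = col (prev j h) x} ⟨x, fun _ _ => rfl⟩
  have he : ∀ x i, e x i =
      wfP.min {y | ∀ j, j < i → col (e x j) y = col (e x j) x} ⟨x, fun _ _ => rfl⟩ := by
    intro x i
    exact wfI.fix_eq _ i
  have hmem : ∀ x i j, j < i → col (e x j) (e x i) = col (e x j) x := by
    intro x i
    rw [he x i]
    exact wfP.min_mem {y | ∀ j, j < i → col (e x j) y = col (e x j) x} ⟨x, fun _ _ => rfl⟩
  by_cases hcase : ∃ x, ∀ i, e x i ≠ x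
  · obtain ⟨x, hx⟩ := hcase
    let f : I → ULift.{u} (Bool × Bool) := fun j => ⟨(decide (e x j ≤ x), decide (x ≤ e x j))⟩
    obtain ⟨⟨p, q⟩, hp⟩ := infinite_pigeonhole f (by rw [hI]; exact hm.aleph0_le) (by
      rw [hI, hm.cof_ord]
      exact (lt_aleph0_of_finite _).trans_le hm.aleph0_le)
    rw [hI] at hp
    refine ⟨e x, _, hp, ?_⟩
    have hf : ∀ j ∈ f ⁻¹' {⟨(p, q)⟩}, decide (e x j ≤ x) = p ∧ decide (x ≤ e x j) = q := by
      intro j hj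
      have h1 : (decide (e x j ≤ x), decide (x ≤ e x j)) = (p, q) := congrArg ULift.down hj
      exact ⟨congrArg Prod.fst h1, congrArg Prod.snd h1⟩
    have hc1 : ∀ i j, j < i → (e x j ≤ e x i ↔ e x j ≤ x) := fun i j hji =>
      iff_of_eq (congrArg Prod.fst (hmem x i j hji))
    have hc2 : ∀ i j, j < i → (e x i ≤ e x j ↔ x ≤ e x j) := fun i j hji =>
      iff_of_eq (congrArg Prod.snd (hmem x i j hji))
    cases p <;> cases q
    · right; right
      intro i hi j hj hij
      obtain ⟨a1, a2⟩ := hf i hi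
      obtain ⟨b1, b2⟩ := hf j hj
      simp only [decide_eq_false_iff_not] at a1 a2 b1 b2
      rcases lt_trichotomy i j with h | h | h
      · exact absurd ((hc1 j i h).1 hij) a1
      · exact h
      · exact absurd ((hc2 i j h).1 hij) b2
    · right; left
      intro i hi j hj hij
      obtain ⟨a1, a2⟩ := hf i hi
      simp only [decide_eq_false_iff_not, decide_eq_true_eq] at a1 a2
      exact lt_of_le_not_ge ((hc2 j i hij).2 a2) fun h => a1 ((hc1 j i hij).1 h)
    · left
      intro i hi j hj hij
      obtain ⟨a1, a2⟩ := hf i hi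
      simp only [decide_eq_false_iff_not, decide_eq_true_eq] at a1 a2
      exact lt_of_le_not_ge ((hc1 j i hij).2 a1) fun h => a2 ((hc2 j i hij).1 h)
    · exfalso
      have hne : (f ⁻¹' {⟨(true, true)⟩}).Nonempty := by
        rw [← Set.nonempty_coe_sort, ← mk_ne_zero_iff, hp]
        exact hm.ne_zero
      obtain ⟨j, hj⟩ := hne
      obtain ⟨a1, a2⟩ := hf j hj
      simp only [decide_eq_true_eq] at a1 a2
      exact hx j (le_antisymm a1 a2)
  · exfalso
    push Not at hcase
    choose α hα using hcase
    have hagree : ∀ x y i, (∀ j, j < i → ((e x j ≤ x ↔ e y j ≤ y) ∧ (x ≤ e x j ↔ y ≤ e y j))) →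
        ∀ j, j ≤ i → e x j = e y j := by
      intro x y i hxy j
      induction j using wfI.induction with
      | h j ih =>
        intro hj
        rw [he x j, he y j]
        apply opcaux_min_congr
        ext z
        simp only [Set.mem_ofPred_eq]
        refine forall_congr' fun k => forall_congr' fun hk => ?_
        have h1 : e x k = e y k := ih k hk (hk.le.trans hj)
        have h3 : col (e x k) x = col (e y k) y :=
          Prod.ext (propext (hxy k (hk.trans_le hj)).1) (propext (hxy k (hk.trans_le hj)).2)
        rw [h3, h1]
    have hfib : ∀ i : I, #{x // α x = i} ≤ l := by
      intro i
      have hinj : Function.Injective (fun x : {x // α x = i} =>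
          ((({j | e x j ≤ x} : Set (Iio i)), ({j | x ≤ e x j} : Set (Iio i))) :
            Set (Iio i) × Set (Iio i))) := by
        rintro ⟨x, hx⟩ ⟨y, hy⟩ hxy
        have q1 := congrArg Prod.fst hxy
        have q2 := congrArg Prod.snd hxy
        apply Subtype.ext
        have := hagree x y i (fun j hj => ⟨Set.ext_iff.1 q1 ⟨j, hj⟩, Set.ext_iff.1 q2 ⟨j, hj⟩⟩) i le_rfl
        have hx' := hα x
        have hy' := hα y
        rw [hx] at hx'
        rw [hy] at hy'
        change x = y
        rw [← hx', this, hy']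
      have hIio : #(Iio i) < m := by
        have := mk_Iio_lt i (by simp [I])
        rwa [hI] at this
      have hs : #(Set (Iio i)) ≤ l := by
        rw [mk_set]
        exact h2 _ hIio
      refine (mk_le_of_injective hinj).trans ?_
      rw [mk_prod, lift_id]
      exact (mul_le_mul' hs hs).trans (mul_eq_self hl0).le
    have hP : #P ≤ l := by
      rw [← mk_congr (Equiv.sigmaFiberEquiv α), mk_sigma]
      refine (sum_le_sum _ (fun _ => l) hfib).trans ?_
      rw [sum_const', hI]
      exact (mul_le_mul' hml le_rfl).trans (mul_eq_self hl0).le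
    exact absurd hl hP.not_gt

theorem opcaux_fam {L : Type u} [PartialOrder L] [BoundedOrder L] [Nontrivial L]
    {m l : Cardinal.{u}} (hm : m.IsRegular) (hml : m ≤ l)
    (h2 : ∀ k < m, (2 : Cardinal.{u}) ^ k ≤ l) (hl : l < #L) :
    ∃ K : Type u, #K = m ∧ OpcFam L L (Set K) := by
  obtain ⟨e, H, hH, h⟩ := opcaux_er hm hml h2 hl
  refine ⟨H, hH, ?_⟩
  have hinf : Infinite H := by
    rw [infinite_iff, hH]
    exact hm.aleph0_le
  have hmax : NoMaxOrder H := by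
    refine ⟨fun a => ?_⟩
    by_contra! hno
    have hsub : H ⊆ Iic a.1 := fun b hb => hno ⟨b, hb⟩
    have h1 : #(Iic a.1) < #m.ord.ToType :=
      mk_Iic_lt a.1 (by simp) (by simpa using hm.aleph0_le)
    have h3 := mk_le_mk_of_subset hsub
    rw [hH] at h3
    simp only [mk_toType, card_ord] at h1
    exact absurd h1 h3.not_gt
  rcases h with h | h | h
  · exact opcaux_of_chain (fun i : H => e i) fun i j hij => h i.2 j.2 hij
  · exact opcaux_of_cochain (fun i : H => e i) fun i j hij => h i.2 j.2 hij
  · exact opcaux_of_antichain (fun i : H => e i) fun i j hij => Subtype.ext (h i i.2 j j.2 hij)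

theorem opcaux_fam_nat {L : Type u} [PartialOrder L] [BoundedOrder L] [Infinite L] :
    OpcFam L L (Set ℕ) := by
  let a : ℕ ↪ L := Infinite.natEmbedding L
  obtain ⟨g, h | h⟩ := exists_increasing_or_nonincreasing_subseq (· < ·) a
  · exact opcaux_of_chain (fun i => a (g i)) fun i j hij => h i j hij
  · obtain ⟨g', h' | h'⟩ := exists_increasing_or_nonincreasing_subseq (· > ·) (fun i => a (g i))
    · exact opcaux_of_cochain (fun i => a (g (g' i))) fun i j hij => h' i j hij
    · refine opcaux_of_antichain (fun i => a (g (g' i))) fun i j hij => ?_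
      by_contra hne
      have hne' : a (g (g' i)) ≠ a (g (g' j)) := fun heq =>
        hne (g'.injective (g.injective (a.injective heq)))
      have hlt := lt_of_le_of_ne hij hne'
      rcases lt_or_gt_of_ne hne with hl | hl
      · exact h _ _ (g'.strictMono hl) hlt
      · exact h' _ _ hl hlt

theorem opcaux_lift_fam {L : Type u} [PartialOrder L] {ι : Type w} (h : OpcFam L L ι) :
    OpcFam (Fin (0 + 1) → L) L ι := by
  obtain ⟨F, hF, hi⟩ := h
  exact ⟨fun i x => F i (x 0), fun i x y hxy => hF i (hxy 0),
    fun i j hij => hi i j fun x => hij fun _ => x⟩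

theorem opcaux_main (L : Type u) [Lattice L] [BoundedOrder L] [Infinite L] (h : OPC L) :
    Cardinal.IsInaccessible #L := by
  classical
  have hstep : ∀ k, ℵ₀ ≤ k → OpcAC L k → OpcAC L (2 ^ k) := by
    rintro k hk ⟨ι, n, a, rfl, ha⟩
    have : Infinite ι := infinite_iff.2 hk
    exact opcaux_key h (opcaux_of_antichain a ha)
  have hfamAC : ∀ K : Type u, Infinite K → OpcFam L L (Set K) → OpcAC L (2 ^ #K) :=
    fun K _ hK => opcaux_key h (opcaux_lift_fam hK)
  have hbound : ∀ k, OpcAC L k → k ≤ #L := by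
    rintro k ⟨ι, n, a, rfl, ha⟩
    have : #ι ≤ #(Fin (n + 1) → L) := mk_le_of_injective (f := a) fun i j hij => ha i j hij.le
    refine this.trans ?_
    rw [mk_pi, prod_const]
    simp only [mk_fin, lift_natCast, lift_uzero]
    exact power_nat_le (aleph0_le_mk L)
  have hLinf : ℵ₀ ≤ #L := aleph0_le_mk L
  have hnot : ¬ OpcAC L #L := fun hac =>
    absurd (cantor #L) (hbound _ (hstep _ hLinf hac)).not_gt
  have hne : ({k : Cardinal.{u} | ¬ OpcAC L k}).Nonempty := ⟨_, hnot⟩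
  obtain ⟨m, hmn, hmin⟩ : ∃ m : Cardinal.{u}, ¬ OpcAC L m ∧ ∀ k < m, OpcAC L k := by
    refine ⟨sInf {k | ¬ OpcAC L k}, csInf_mem hne, fun k hk => ?_⟩
    by_contra hk'
    exact absurd (csInf_le' (s := {k | ¬ OpcAC L k}) hk') hk.not_ge
  have hlt : ∀ k, OpcAC L k → k < m := by
    intro k hk
    by_contra! hle
    exact hmn (hk.mono hle)
  have hmL : m ≤ #L := by
    by_contra! hle
    exact hnot (hmin _ hle)
  have h0 : ℵ₀ < m := by
    have h1 := hfamAC (ULift.{u} ℕ) inferInstance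
      (opcaux_fam_nat.comp (fun S : Set (ULift.{u} ℕ) => Set.image ULift.down S)
        (Set.image_injective.2 ULift.down_injective))
    have h3 := hlt _ h1
    have h4 : #(ULift.{u} ℕ) = ℵ₀ := by simp
    rw [h4] at h3
    exact (cantor _).trans h3
  have hsl : ∀ k < m, (2 : Cardinal.{u}) ^ k < m := by
    intro k hk
    rcases lt_or_ge k ℵ₀ with hf | hf
    · exact (power_lt_aleph0 (natCast_lt_aleph0 (n := 2)) hf).trans h0
    · exact hlt _ (hstep k hf (hmin k hk))
  have hreg : m ≤ m.ord.cof := by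
    by_contra! hcof
    obtain ⟨s, hs, hsc⟩ := Order.exists_cof_eq m.ord.ToType
    rw [Ordinal.cof_toType] at hsc
    obtain ⟨ι, n, a, hι, ha⟩ := hmin _ hcof
    obtain ⟨φ⟩ := Cardinal.eq.1 (hsc.trans hι.symm)
    have hIic : ∀ i : m.ord.ToType, #(Iic i) < m := by
      intro i
      have h1 : #(Iic i) < #m.ord.ToType := mk_Iic_lt i (by simp) (by simpa using h0.le)
      simpa using h1
    have hex : ∀ i : ι, ∃ K : Type u, #(Iic ((φ.symm i : s) : m.ord.ToType)) ≤ #K ∧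
        OpcFam L L (Set K) := by
      intro i
      let k := max ℵ₀ #(Iic ((φ.symm i : s) : m.ord.ToType))
      have hk : k < m := max_lt h0 (hIic _)
      obtain ⟨K, hK, hF⟩ := opcaux_fam (L := L) (m := Order.succ k) (l := 2 ^ k)
        (isRegular_succ (le_max_left _ _)) (Order.succ_le_of_lt (cantor k))
        (fun j hj => power_le_power_left two_ne_zero (Order.lt_succ_iff.1 hj))
        ((hsl k hk).trans_le hmL)
      refine ⟨K, ?_, hF⟩
      rw [hK]
      exact (le_max_right _ _).trans (Order.le_succ k)
    choose K hK hF using hex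
    have hbig : m ≤ #(Σ i, K i) := by
      have hcov : (⋃ i : ι, Iic ((φ.symm i : s) : m.ord.ToType)) = Set.univ := by
        rw [eq_univ_iff_forall]
        intro x
        obtain ⟨y, hy, hxy⟩ := hs x
        rw [mem_iUnion]
        exact ⟨φ ⟨y, hy⟩, by simpa using hxy⟩
      have h1 : #m.ord.ToType = m := by simp
      calc m = #(Set.univ : Set m.ord.ToType) := by rw [mk_univ, h1]
        _ ≤ sum fun i : ι => #(Iic ((φ.symm i : s) : m.ord.ToType)) := by
          rw [← hcov]
          exact mk_iUnion_le_sum_mk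
        _ ≤ sum fun i => #(K i) := sum_le_sum _ _ hK
        _ = #(Σ i, K i) := (mk_sigma _).symm
    have hinf : Infinite (Σ i, K i) := infinite_iff.2 (h0.le.trans hbig)
    have hac := opcaux_key h (opcaux_glue a ha K hF)
    exact hmn (hac.mono (hbig.trans (cantor _).le))
  have hmreg : m.IsRegular := ⟨h0.le, hreg⟩
  have heq : m = #L := by
    by_contra hne'
    have hmlt := lt_of_le_of_ne hmL hne'
    obtain ⟨K, hK, hF⟩ := opcaux_fam (L := L) hmreg le_rfl (fun k hk => (hsl k hk).le) hmlt
    have hinf : Infinite K := infinite_iff.2 (by rw [hK]; exact h0.le)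
    have hac := hfamAC K hinf hF
    rw [hK] at hac
    exact hmn (hac.mono (cantor _).le)
  rw [← heq]
  exact ⟨h0, hreg, fun k hk => hsl k hk⟩

end PartC

/-- If `L` is an infinite order polynomially complete lattice, then `|L|` is a strongly
inaccessible cardinal. -/
theorem opc_card_isInaccessible (L : Type u) [Lattice L] [Infinite L] (h : OPC L) :
    Cardinal.IsInaccessible #L := by
  obtain ⟨t, ht⟩ := opcaux_top h
  obtain ⟨b, hb⟩ := opcaux_top (opcaux_dual h)
  let _ : BoundedOrder L :=
    { top := t
      le_top := ht
      bot := OrderDual.ofDual b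
      bot_le := fun x => hb (OrderDual.toDual x) }
  exact opcaux_main L h
end

section
/- If L is an order polynomially complete lattice, then L is bounded, i.e., L has a greatest element and a smallest element. -/
universe u v w

open Cardinal

/-- A lattice without a top admits a monotone self-map `f` with `f y ≰ y` for all `y`. -/
theorem exists_mono_not_le (L : Type u) [Lattice L] (hn : ¬ ∃ t : L, ∀ x : L, x ≤ t) :
    ∃ f : L → L, Monotone f ∧ ∀ y, ¬ f y ≤ y := by
  classical
  obtain ⟨C, hC⟩ : ∃ C : Set L, IsMaxChain (· ≤ ·) C := ⟨_, maxChain_spec⟩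
  have hunb : ∀ y : L, ({x | x ∈ C ∧ ¬ x ≤ y} : Set L).Nonempty := by
    intro y
    by_contra hne
    have hle : ∀ x ∈ C, x ≤ y := by
      intro x hx
      by_contra hxy
      exact hne ⟨x, hx, hxy⟩
    apply hn
    refine ⟨y, fun z => ?_⟩
    have hch : IsChain (· ≤ ·) (insert (y ⊔ z) C) :=
      hC.1.insert fun b hb _ => Or.inr ((hle b hb).trans le_sup_left)
    have heq := hC.2 hch (Set.subset_insert _ _)
    have hmem : y ⊔ z ∈ C := by
      rw [heq]; exact Set.mem_insert _ _
    exact le_sup_right.trans (hle _ hmem)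
  have wf : WellFounded (WellOrderingRel : L → L → Prop) := WellOrderingRel.isWellOrder.wf
  refine ⟨fun y => wf.min _ (hunb y), ?_, fun y => (wf.min_mem _ (hunb y)).2⟩
  intro y y' hyy
  have h1 := wf.min_mem _ (hunb y)
  have h2 := wf.min_mem _ (hunb y')
  show wf.min _ (hunb y) ≤ wf.min _ (hunb y')
  rcases hC.1.total h1.1 h2.1 with hle | hle
  · exact hle
  · have h3 : ¬ wf.min _ (hunb y) ≤ y' := fun hc => h2.2 (hle.trans hc)
    have h4 := wf.not_lt_min {x | x ∈ C ∧ ¬ x ≤ y'} (x := wf.min _ (hunb y)) ⟨h1.1, h3⟩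
    have h5 := wf.not_lt_min {x | x ∈ C ∧ ¬ x ≤ y} (x := wf.min _ (hunb y'))
      ⟨h2.1, fun hc => h2.2 (hc.trans hyy)⟩
    rcases trichotomous_of WellOrderingRel (wf.min _ (hunb y)) (wf.min _ (hunb y'))
      with h6 | h6 | h6
    · exact absurd h6 h4
    · exact h6.le
    · exact absurd h6 h5

theorem poly_le (L : Type u) [Lattice L] [Nonempty L] (p : (Fin 1 → L) → L)
    (hp : IsPolynomialFn L 1 p) : ∃ M : L, ∀ y, M ≤ y → p (fun _ => y) ≤ y := by
  refine latticeClosure_min (t := {p : (Fin 1 → L) → L |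
    ∃ M : L, ∀ y, M ≤ y → p (fun _ => y) ≤ y}) ?_ ⟨?_, ?_⟩ hp
  · rintro g (⟨i, rfl⟩ | ⟨c, rfl⟩)
    · exact ⟨Classical.arbitrary L, fun y _ => le_rfl⟩
    · exact ⟨c, fun y hy => hy⟩
  · rintro a ⟨M, hM⟩ b ⟨N, hN⟩
    exact ⟨M ⊔ N, fun y hy => sup_le (hM y (le_sup_left.trans hy)) (hN y (le_sup_right.trans hy))⟩
  · rintro a ⟨M, hM⟩ b ⟨N, hN⟩
    exact ⟨M, fun y hy => inf_le_left.trans (hM y hy)⟩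

theorem le_poly (L : Type u) [Lattice L] [Nonempty L] (p : (Fin 1 → L) → L)
    (hp : IsPolynomialFn L 1 p) : ∃ M : L, ∀ y, y ≤ M → y ≤ p (fun _ => y) := by
  refine latticeClosure_min (t := {p : (Fin 1 → L) → L |
    ∃ M : L, ∀ y, y ≤ M → y ≤ p (fun _ => y)}) ?_ ⟨?_, ?_⟩ hp
  · rintro g (⟨i, rfl⟩ | ⟨c, rfl⟩)
    · exact ⟨Classical.arbitrary L, fun y _ => le_rfl⟩
    · exact ⟨c, fun y hy => hy⟩
  · rintro a ⟨M, hM⟩ b ⟨N, hN⟩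
    exact ⟨M, fun y hy => (hM y hy).trans le_sup_left⟩
  · rintro a ⟨M, hM⟩ b ⟨N, hN⟩
    exact ⟨M ⊓ N, fun y hy => le_inf (hM y (hy.trans inf_le_left)) (hN y (hy.trans inf_le_right))⟩

/-- Every order polynomially complete lattice is bounded: it has a greatest and a
smallest element. -/
theorem opc_bounded (L : Type u) [Lattice L] [Nonempty L] (h : OPC L) :
    (∃ t : L, ∀ x : L, x ≤ t) ∧ (∃ b : L, ∀ x : L, b ≤ x) := by
  constructor
  · by_contra hn
    obtain ⟨f, hf, hf'⟩ := exists_mono_not_le L hn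
    obtain ⟨M, hM⟩ := poly_le L _ (h 1 le_rfl (fun x => f (x 0)) fun x y hxy => hf (hxy 0))
    exact hf' M (hM M le_rfl)
  · by_contra hn
    obtain ⟨f, hf, hf'⟩ := exists_mono_not_le Lᵒᵈ
      (fun ⟨t, ht⟩ => hn ⟨OrderDual.ofDual t, fun x => ht (OrderDual.toDual x)⟩)
    obtain ⟨M, hM⟩ := le_poly L _ (h 1 le_rfl
      (fun x => OrderDual.ofDual (f (OrderDual.toDual (x 0)))) fun x y hxy =>
        hf (OrderDual.toDual_le_toDual.2 (hxy 0)))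
    exact hf' (OrderDual.toDual M) (hM M le_rfl)
end

section
/- Let L be a partial order and κ an infinite cardinal. If |L| > 2^κ, then μ(L) > κ⁺ (in particular μ(L) > κ): L contains a uniform subset of cardinality κ⁺. -/
universe u v w

open Cardinal

/-- The end-homogeneous sequence at the heart of the Erdős–Rado theorem: for a colouring `c`
by a finite type of a set of size `> 2^κ` there is an injective `κ⁺`-sequence on which the
colour of a pair depends only on its smaller index. -/
theorem exists_endHomogeneous {L C : Type u} [Finite C] (c : L → L → C) (κ : Cardinal.{u})
    (hκ : ℵ₀ ≤ κ) (h : 2 ^ κ < #L) :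
    ∃ (x : (Order.succ κ).ord.ToType → L) (d : (Order.succ κ).ord.ToType → C),
      ∀ i j, j < i → x i ≠ x j ∧ c (x j) (x i) = d j := by
  classical
  let I := (Order.succ κ).ord.ToType
  have hL : Nonempty L := by
    rw [← Cardinal.mk_ne_zero_iff]
    exact (lt_of_le_of_lt zero_le h).ne'
  let N := Σ i : I, (Set.Iio i → C)
  let β : N → Type u := fun n => Set.Iio n.1
  let good : (Σ n : N, β n → L) → L → Prop := fun p y =>
    ∀ k : β p.1, y ≠ p.2 k ∧ c (p.2 k) y = p.1.2 k
  let g : (Σ n : N, β n → L) → L := fun p => Classical.epsilon (good p)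
  let e : WType β → L := WType.elim L g
  have hIio : ∀ i : I, #(Set.Iio i) ≤ κ := fun i =>
    Order.lt_succ_iff.1 (Cardinal.mk_Iio_toType_ord_lt i)
  have h2 : ℵ₀ ≤ (2 : Cardinal.{u}) ^ κ := hκ.trans (Cardinal.cantor κ).le
  have hpow : ((2 : Cardinal.{u}) ^ κ) ^ κ = 2 ^ κ := by
    rw [← Cardinal.power_mul, Cardinal.mul_eq_self hκ]
  have hpow' : ∀ (m : Cardinal.{u}) (i : I), m ≤ 2 ^ κ → m ^ #(Set.Iio i) ≤ 2 ^ κ := by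
    intro m i hm
    calc m ^ #(Set.Iio i) ≤ ((2 : Cardinal.{u}) ^ κ) ^ #(Set.Iio i) :=
          Cardinal.power_le_power_right hm
      _ ≤ ((2 : Cardinal.{u}) ^ κ) ^ κ :=
          Cardinal.power_le_power_left (Cardinal.aleph0_pos.trans_le h2).ne' (hIio i)
      _ = 2 ^ κ := hpow
  have hI : #I ≤ 2 ^ κ := by
    have : #I = Order.succ κ := by simp [I]
    rw [this]
    exact Order.succ_le_of_lt (Cardinal.cantor κ)
  have hN : #N ≤ 2 ^ κ := by
    rw [Cardinal.mk_sigma]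
    calc Cardinal.sum (fun i : I => #(Set.Iio i → C))
        ≤ Cardinal.sum (fun _ : I => (2 : Cardinal.{u}) ^ κ) := by
          apply Cardinal.sum_le_sum
          intro i
          rw [← Cardinal.power_def]
          exact hpow' _ i ((Cardinal.lt_aleph0_of_finite C).le.trans h2)
      _ = #I * 2 ^ κ := by simp
      _ ≤ 2 ^ κ * 2 ^ κ := mul_le_mul_left hI _
      _ = 2 ^ κ := Cardinal.mul_eq_self h2
  have hW : #(WType β) ≤ 2 ^ κ := by
    apply WType.cardinalMk_le_of_le
    calc Cardinal.sum (fun n : N => ((2 : Cardinal.{u}) ^ κ) ^ #(β n))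
        ≤ Cardinal.sum (fun _ : N => (2 : Cardinal.{u}) ^ κ) :=
          Cardinal.sum_le_sum _ _ fun n : N => hpow' _ n.1 le_rfl
      _ = #N * 2 ^ κ := by simp
      _ ≤ 2 ^ κ * 2 ^ κ := mul_le_mul_left hN _
      _ = 2 ^ κ := Cardinal.mul_eq_self h2
  have hns : ¬ Function.Surjective e := fun hs =>
    absurd (Cardinal.mk_le_of_surjective hs) (not_le.2 (hW.trans_lt h))
  obtain ⟨a, ha⟩ : ∃ a, ∀ w, e w ≠ a := by
    simpa [Function.Surjective] using hns
  let wf : WellFounded ((· < ·) : I → I → Prop) := wellFounded_lt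
  let F : ∀ i : I, (∀ j : I, j < i → WType β) → WType β := fun i r =>
    WType.mk (⟨i, fun j => c (e (r j.1 j.2)) a⟩ : N) (fun j => r j.1 j.2)
  let w : I → WType β := wf.fix F
  have hw : ∀ i, w i = WType.mk (⟨i, fun j => c (e (w j.1)) a⟩ : N) (fun j => w j.1) :=
    fun i => wf.fix_eq F i
  refine ⟨fun i => e (w i), fun i => c (e (w i)) a, fun i j hji => ?_⟩
  let p : Σ n : N, β n → L := ⟨⟨i, fun j => c (e (w j.1)) a⟩, fun j => e (w j.1)⟩
  have hgood : good p a := fun k => ⟨(ha _).symm, rfl⟩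
  have he : e (w i) = g p := by rw [hw i]; rfl
  have hs : good p (g p) := Classical.epsilon_spec ⟨a, hgood⟩
  have := hs ⟨j, hji⟩
  rw [← he] at this
  exact this

theorem exists_uniform_succ (L : Type u) [PartialOrder L] (κ : Cardinal.{u})
    (hκ : ℵ₀ ≤ κ) (h : 2 ^ κ < #L) :
    ∃ A : Set L, IsUniform A ∧ #A = Order.succ κ := by
  obtain ⟨x, d, hx⟩ := exists_endHomogeneous
    (fun a b : L => (ULift.up (a < b, b < a) : ULift.{u} (Prop × Prop))) κ hκ h
  have hI : #(Order.succ κ).ord.ToType = Order.succ κ := by simp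
  have hreg := Cardinal.isRegular_succ hκ
  obtain ⟨t, ht⟩ := Cardinal.infinite_pigeonhole d (by rw [hI]; exact hreg.aleph0_le)
    (by rw [hI, hreg.cof_ord]
        exact (Cardinal.lt_aleph0_of_finite _).trans_le hreg.aleph0_le)
  rw [hI] at ht
  have hinj : Function.Injective x := by
    intro i j hij
    rcases lt_trichotomy i j with hl | hl | hl
    · exact absurd hij.symm (hx _ _ hl).1
    · exact hl
    · exact absurd hij (hx _ _ hl).1
  obtain ⟨P, Q⟩ := t
  set S := d ⁻¹' {ULift.up (P, Q)} with hS
  have key : ∀ i j, j ∈ S → j < i → (x j < x i ↔ P) ∧ (x i < x j ↔ Q) := by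
    intro i j hj hji
    have h1 := (hx i j hji).2
    rw [show d j = ULift.up (P, Q) from hj] at h1
    simpa using h1
  refine ⟨x '' S, ?_, by rw [Cardinal.mk_image_eq hinj, ht]⟩
  by_cases hP : P
  · have hm : ∀ i j, j ∈ S → j < i → x j < x i := fun i j hj hji => (key i j hj hji).1.2 hP
    refine Or.inr (Or.inl ⟨?_, ?_⟩)
    · rintro _ ⟨i, hi, rfl⟩ _ ⟨j, hj, rfl⟩ hne
      rcases lt_trichotomy i j with hl | rfl | hl
      · exact Or.inl (hm _ _ hi hl).le
      · exact absurd rfl hne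
      · exact Or.inr (hm _ _ hj hl).le
    · rw [Set.wellFoundedOn_image]
      refine Set.WellFoundedOn.mono' (r := (· < ·)) ?_ wellFounded_lt.wellFoundedOn
      intro i hi j hj hij
      rcases lt_trichotomy i j with hl | rfl | hl
      · exact hl
      · exact absurd hij (lt_irrefl _)
      · exact absurd hij (lt_asymm (hm _ _ hj hl))
  by_cases hQ : Q
  · have hm : ∀ i j, j ∈ S → j < i → x i < x j := fun i j hj hji => (key i j hj hji).2.2 hQ
    refine Or.inr (Or.inr ⟨?_, ?_⟩)
    · rintro _ ⟨i, hi, rfl⟩ _ ⟨j, hj, rfl⟩ hne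
      rcases lt_trichotomy i j with hl | rfl | hl
      · exact Or.inr (hm _ _ hi hl).le
      · exact absurd rfl hne
      · exact Or.inl (hm _ _ hj hl).le
    · rw [Set.wellFoundedOn_image]
      refine Set.WellFoundedOn.mono' (r := (· < ·)) ?_ wellFounded_lt.wellFoundedOn
      intro i hi j hj hij
      rcases lt_trichotomy i j with hl | rfl | hl
      · exact hl
      · exact absurd hij (lt_irrefl _)
      · exact absurd hij (lt_asymm (hm _ _ hj hl))
  · refine Or.inl ?_
    rintro _ ⟨i, hi, rfl⟩ _ ⟨j, hj, rfl⟩ hne hle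
    have hlt : x i < x j := lt_of_le_of_ne hle hne
    rcases lt_trichotomy i j with hl | rfl | hl
    · exact hP ((key _ _ hi hl).1.1 hlt)
    · exact hne rfl
    · exact hQ ((key _ _ hj hl).2.1 hlt)

theorem IsUniform.subset {L : Type u} [PartialOrder L] {A B : Set L} (hA : IsUniform A)
    (hBA : B ⊆ A) : IsUniform B := by
  rcases hA with h | h | h
  · exact Or.inl (h.subset hBA)
  · exact Or.inr (Or.inl ⟨h.1.mono hBA, h.2.subset hBA⟩)
  · exact Or.inr (Or.inr ⟨h.1.mono hBA, h.2.subset hBA⟩)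

/-- If `|L| > 2^κ` for an infinite cardinal `κ`, then `μ(L) > κ⁺`: indeed `L` contains a
uniform subset of cardinality `κ⁺`. -/
theorem mu_gt_succ_of_card_gt_two_pow (L : Type u) [PartialOrder L] (κ : Cardinal.{u})
    (hκ : ℵ₀ ≤ κ) (h : 2 ^ κ < #L) :
    Order.succ κ < mu L ∧ ∃ A : Set L, IsUniform A ∧ #A = Order.succ κ := by
  obtain ⟨A, hA, hcard⟩ := exists_uniform_succ L κ hκ h
  refine ⟨?_, A, hA, hcard⟩
  have hne : {m : Cardinal.{u} | ¬ ∃ A : Set L, IsUniform A ∧ #A = m}.Nonempty := by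
    refine ⟨Order.succ #L, ?_⟩
    rintro ⟨B, -, hB⟩
    exact absurd (Cardinal.mk_set_le B) (not_le.2 (hB ▸ Order.lt_succ _))
  by_contra hlt
  have hle : mu L ≤ #A := hcard ▸ not_lt.1 hlt
  obtain ⟨B, hBA, hB⟩ := Cardinal.le_mk_iff_exists_subset.1 hle
  exact csInf_mem hne ⟨B, hA.subset hBA, hB⟩
end

section
/- Let κ be a singular strong limit cardinal with cofinality λ = cf(κ) < κ, and let L be a partial order with |L| = κ. Then there is a family (A_ζ)_{ζ<λ} of pairwise disjoint subsets of L such that: (1) (A_ζ)_{ζ<λ} is canonical; (2) the sequence of cardinalities (|A_ζ|)_{ζ<λ} is strictly increasing; (3) sup_{ζ<λ} |A_ζ| = κ; (4) |A_ζ| > λ for every ζ < λ. -/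
universe u v w

open Cardinal

namespace Canonization

open Ordinal Order

/-- Code for the comparison of two elements. -/
def col {L : Type u} [PartialOrder L] (a b : L) : Prop × Prop := (a ≤ b, b ≤ a)

theorem mk_fun_le {X : Type u} {m : Cardinal.{u}} (hm : ℵ₀ ≤ m) (hX : #X ≤ m) :
    #(X → Prop × Prop) ≤ 2 ^ m := by
  have h4 : #(X → Prop × Prop) = ((2 : Cardinal.{u}) * 2) ^ #X := by
    simp
    norm_num
  have hle : ((2 : Cardinal.{u}) * 2) ≤ 2 ^ m := by
    have : ((2 : Cardinal.{u}) * 2) < ℵ₀ :=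
      Cardinal.mul_lt_aleph0 Cardinal.ofNat_lt_aleph0 Cardinal.ofNat_lt_aleph0
    exact this.le.trans (hm.trans (Cardinal.cantor m).le)
  rw [h4]
  calc ((2 : Cardinal.{u}) * 2) ^ #X ≤ (2 ^ m) ^ #X := Cardinal.power_le_power_right hle
    _ = 2 ^ (m * #X) := (Cardinal.power_mul).symm
    _ ≤ 2 ^ m := by
        apply Cardinal.power_le_power_left (by norm_num)
        calc m * #X ≤ m * m := by gcongr
          _ = m := Cardinal.mul_eq_self hm

section ER

variable {X : Type u} {C : Type v} {I : Type w} [LinearOrder I] [WellFoundedLT I]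

open Classical in
/-- Choose a realization of a partial type. -/
noncomputable def real [Nonempty X] (c : X → X → C) (S : Set (X × C)) : X :=
  if h : ∃ z, ∀ p ∈ S, c p.1 z = p.2 then h.choose else Classical.arbitrary X

theorem real_spec [Nonempty X] (c : X → X → C) (S : Set (X × C)) (x : X)
    (h : ∀ p ∈ S, c p.1 x = p.2) : ∀ p ∈ S, c p.1 (real c S) = p.2 := by
  have h' : ∃ z, ∀ p ∈ S, c p.1 z = p.2 := ⟨x, h⟩
  unfold real
  rw [dif_pos h']
  exact h'.choose_spec

/-- The branch of the Erdős–Rado tree leading to `x`. -/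
noncomputable def br [Nonempty X] (c : X → X → C) (x : X) : I → X :=
  (wellFounded_lt (α := I)).fix fun i y =>
    real c {p | ∃ j, ∃ h : j < i, p = (y j h, c (y j h) x)}

theorem br_eq [Nonempty X] (c : X → X → C) (x : X) (i : I) :
    br c x i = real c {p | ∃ j, ∃ _ : j < i, p = (br c x j, c (br c x j) x)} := by
  unfold br
  rw [WellFounded.fix_eq]

theorem br_spec [Nonempty X] (c : X → X → C) (x : X) (i j : I) (h : j < i) :
    c (br c x j) (br c x i) = c (br c x j) x := by
  rw [br_eq c x i]
  refine real_spec c _ x ?_ (br c x j, c (br c x j) x) ⟨j, h, rfl⟩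
  rintro p ⟨j, _, rfl⟩
  rfl

theorem br_congr [Nonempty X] (c : X → X → C) (x x' : X)
    (h : ∀ i : I, c (br c x i) x = c (br c x' i) x') (i : I) : br c x i = br c x' i := by
  induction i using WellFoundedLT.induction with
  | ind i ih =>
    rw [br_eq c x i, br_eq c x' i]
    congr 1
    ext p
    constructor
    · rintro ⟨j, hj, rfl⟩
      exact ⟨j, hj, by rw [h j, ih j hj]⟩
    · rintro ⟨j, hj, rfl⟩
      exact ⟨j, hj, by rw [h j, ih j hj]⟩

end ER

/-- End-homogeneous sequences. -/
theorem exists_endhom {L : Type u} [PartialOrder L] {I : Type u} [LinearOrder I] [WellFoundedLT I]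
    (B : Set L) (h : #(I → Prop × Prop) < #B) :
    ∃ (y : I → L) (g : I → Prop × Prop), (∀ i, y i ∈ B) ∧
      (∀ j i, j < i → col (y j) (y i) = g j) ∧ ∀ i, g i ≠ (True, True) := by
  have hne : Nonempty B := by
    rw [← Cardinal.mk_ne_zero_iff]
    exact (bot_le.trans_lt h).ne'
  let c : B → B → Prop × Prop := fun a b => col a.1 b.1
  have hni : ¬ Function.Injective (fun (x : B) (i : I) => c (br c x i) x) := by
    intro hinj
    exact (Cardinal.mk_le_of_injective hinj).not_gt h
  simp only [Function.Injective, not_forall] at hni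
  obtain ⟨x, x', hxx, hne'⟩ := hni
  have hc : ∀ i : I, c (br c x i) x = c (br c x' i) x' := fun i => congrFun hxx i
  have hb := br_congr c x x' hc
  refine ⟨fun i => (br c x i).1, fun i => c (br c x i) x, fun i => (br c x i).2, ?_, ?_⟩
  · intro j i hji
    exact br_spec c x i j hji
  · intro i hi
    have key : ∀ z : B, c (br c x i) z = (True, True) → br c x i = z := by
      intro z hz
      simp only [c, col, Prod.mk.injEq, eq_iff_iff, iff_true] at hz
      exact Subtype.ext (le_antisymm hz.1 hz.2)
    apply hne'
    rw [← key x hi]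
    apply key
    rw [← hi]
    simp only
    rw [hc i, hb i]

/-- The uniform type tagged by a pair. -/
def Unif {L : Type u} [PartialOrder L] (A : Set L) (t : Prop × Prop) : Prop :=
  (t = (False, False) → IsAntichain (· ≤ ·) A) ∧ (t = (True, False) → IsWellChain A) ∧
  (t = (False, True) → IsCoWellChain A) ∧ t ≠ (True, True)

theorem exists_unif {L : Type u} [PartialOrder L] (B : Set L) (ν : Cardinal.{u})
    (hν : ν.IsRegular) (h : 2 ^ ν < #B) : ∃ A ⊆ B, #A = ν ∧ ∃ t, Unif A t := by
  have hmk : #ν.ord.ToType = ν := Cardinal.mk_ord_toType ν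
  have h1 : #(ν.ord.ToType → Prop × Prop) < #B :=
    (mk_fun_le hν.aleph0_le hmk.le).trans_lt h
  obtain ⟨y, g, hyB, hy, hg⟩ := exists_endhom B h1
  obtain ⟨t, ht⟩ := Cardinal.infinite_pigeonhole (fun i => ULift.up.{u} (g i))
    (by rw [hmk]; exact hν.aleph0_le) (by
      rw [hmk, hν.cof_ord]
      exact (Cardinal.lt_aleph0_of_finite _).trans_le hν.aleph0_le)
  obtain ⟨t⟩ := t
  set J := (fun i => ULift.up.{u} (g i)) ⁻¹' {ULift.up t} with hJ
  have hgJ : ∀ j ∈ J, g j = t := fun j hj => by simpa [hJ] using hj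
  have hcol : ∀ j ∈ J, ∀ i ∈ J, j < i → col (y j) (y i) = t := fun j hj i _ hji =>
    (hy j i hji).trans (hgJ j hj)
  have hJne : J.Nonempty := by
    rw [← Set.nonempty_coe_sort, ← Cardinal.mk_ne_zero_iff, ht, hmk]
    exact hν.ne_zero
  have htt : t ≠ (True, True) := by
    obtain ⟨j, hj⟩ := hJne
    rw [← hgJ j hj]; exact hg j
  have hlt : ∀ j i, j < i → y j ≠ y i := by
    intro j i hji he
    apply hg j
    rw [← hy j i hji, he]
    simp [col]
  have hinj : Function.Injective y := by
    intro i j hij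
    rcases lt_trichotomy i j with h | h | h
    · exact (hlt _ _ h hij).elim
    · exact h
    · exact (hlt _ _ h hij.symm).elim
  refine ⟨y '' J, ?_, ?_, t, ?_, ?_, ?_, htt⟩
  · rintro _ ⟨j, _, rfl⟩; exact hyB j
  · rw [Cardinal.mk_image_eq hinj, ht, hmk]
  · rintro rfl
    rintro _ ⟨i, hi, rfl⟩ _ ⟨j, hj, rfl⟩ hne hle
    rcases lt_trichotomy i j with h | h | h
    · have := hcol i hi j hj h
      simp [col] at this
      exact this.1 hle
    · exact hne (by rw [h])
    · have := hcol j hj i hi h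
      simp [col] at this
      exact this.2 hle
  · rintro rfl
    have hmono : ∀ i ∈ J, ∀ j ∈ J, i < j → y i < y j := by
      intro i hi j hj hij
      have := hcol i hi j hj hij
      simp [col] at this
      exact lt_of_le_not_ge this.1 this.2
    constructor
    · rintro _ ⟨i, hi, rfl⟩ _ ⟨j, hj, rfl⟩ hne
      rcases lt_trichotomy i j with h | h | h
      · exact Or.inl (hmono i hi j hj h).le
      · exact (hne (by rw [h])).elim
      · exact Or.inr (hmono j hj i hi h).le
    · rw [Set.WellFoundedOn]
      refine Subrelation.wf (r := InvImage (· < ·)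
        (fun a : (y '' J : Set L) => a.2.choose)) ?_ (InvImage.wf _ wellFounded_lt)
      intro a b hab
      obtain ⟨ha, ha'⟩ := a.2.choose_spec
      obtain ⟨hb, hb'⟩ := b.2.choose_spec
      change a.2.choose < b.2.choose
      by_contra hcon
      rcases (not_lt.1 hcon).eq_or_lt with h | h
      · apply (show a.1 < b.1 from hab).ne
        rw [← ha', ← hb', h]
      · have h2 := hmono _ hb _ ha h
        rw [ha', hb'] at h2
        exact lt_asymm h2 hab
  · rintro rfl
    have hmono : ∀ i ∈ J, ∀ j ∈ J, i < j → y j < y i := by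
      intro i hi j hj hij
      have := hcol i hi j hj hij
      simp [col] at this
      exact lt_of_le_not_ge this.2 this.1
    constructor
    · rintro _ ⟨i, hi, rfl⟩ _ ⟨j, hj, rfl⟩ hne
      rcases lt_trichotomy i j with h | h | h
      · exact Or.inr (hmono i hi j hj h).le
      · exact (hne (by rw [h])).elim
      · exact Or.inl (hmono j hj i hi h).le
    · rw [Set.WellFoundedOn]
      refine Subrelation.wf (r := InvImage (· < ·)
        (fun a : (y '' J : Set L) => a.2.choose)) ?_ (InvImage.wf _ wellFounded_lt)
      intro a b hab
      obtain ⟨ha, ha'⟩ := a.2.choose_spec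
      obtain ⟨hb, hb'⟩ := b.2.choose_spec
      change a.2.choose < b.2.choose
      by_contra hcon
      rcases (not_lt.1 hcon).eq_or_lt with h | h
      · apply (show a.1 > b.1 from hab).ne
        rw [← ha', ← hb', h]
      · have h2 := hmono _ hb _ ha h
        rw [ha', hb'] at h2
        exact lt_asymm h2 hab

theorem Unif.mono {L : Type u} [PartialOrder L] {A B : Set L} {t : Prop × Prop} (h : Unif B t)
    (hAB : A ⊆ B) : Unif A t :=
  ⟨fun e => (h.1 e).subset hAB,
   fun e => ⟨(h.2.1 e).1.mono hAB, (h.2.1 e).2.subset hAB⟩,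
   fun e => ⟨(h.2.2.1 e).1.mono hAB, (h.2.2.1 e).2.subset hAB⟩, h.2.2.2⟩

/-- The sequence of cardinals. -/
noncomputable def nuSeq {I : Type u} [LinearOrder I] [WellFoundedLT I] (l : Cardinal.{u})
    (h : I → Cardinal.{u}) : I → Cardinal.{u} :=
  (wellFounded_lt (α := I)).fix fun i y =>
    succ (2 ^ max l (max (h i) (⨆ j : Set.Iio i, y j.1 j.2)))

theorem nuSeq_eq {I : Type u} [LinearOrder I] [WellFoundedLT I] (l : Cardinal.{u})
    (h : I → Cardinal.{u}) (i : I) : nuSeq l h i =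
    succ (2 ^ max l (max (h i) (⨆ j : Set.Iio i, nuSeq l h j.1))) := by
  conv_lhs => rw [nuSeq, WellFounded.fix_eq]
  rfl

/-- Thin out a set of regular size so that a map with few values is constant. -/
theorem thin {L : Type u} {T : Type u} (A : Set L) (f : L → T) (hr : (#A).IsRegular)
    (hT : #T < #A) : ∃ A' ⊆ A, #A' = #A ∧ ∃ t, ∀ a ∈ A', f a = t := by
  obtain ⟨t, A', hA', hc, ht⟩ := Cardinal.infinite_pigeonhole_set (s := A) (fun a => f a.1) (#A)
    le_rfl hr.aleph0_le (by rwa [hr.cof_ord])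
  exact ⟨A', hA', (Cardinal.mk_le_mk_of_subset hA').antisymm hc, t, fun a ha => ht ha⟩

theorem exists_cofinal (κ : Cardinal.{u}) :
    ∃ h : κ.ord.cof.ord.ToType → Cardinal.{u}, (∀ i, h i < κ) ∧ ∀ c < κ, ∃ i, c ≤ h i := by
  obtain ⟨s, hs, hcard⟩ := Order.exists_cof_eq κ.ord.ToType
  rw [Ordinal.cof_toType, ← Cardinal.mk_ord_toType κ.ord.cof] at hcard
  obtain ⟨e⟩ := Cardinal.eq.1 hcard.symm
  refine ⟨fun i => (ToType.toOrd (e i).1).1.card, fun i => ?_, fun c hc => ?_⟩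
  · exact Cardinal.lt_ord.1 (ToType.toOrd (e i).1).2
  · obtain ⟨x, hx, hle⟩ := hs (ToType.mk ⟨c.ord, Cardinal.ord_lt_ord.2 hc⟩)
    refine ⟨e.symm ⟨x, hx⟩, ?_⟩
    simp only [Equiv.apply_symm_apply]
    rw [← Cardinal.ord_le]
    have := ToType.mk.symm.monotone hle
    rw [OrderIso.symm_apply_apply] at this
    exact this

theorem main (L : Type u) [PartialOrder L] (κ : Cardinal.{u})
    (hκ : κ.IsStrongLimit) (hsing : κ.ord.cof < κ) (hL : #L = κ) :
    ∃ A : κ.ord.cof.ord.ToType → Set L,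
      Pairwise (Function.onFun Disjoint A) ∧ IsCanonical A ∧
      StrictMono (fun ζ => #(A ζ)) ∧
      (⨆ ζ, #(A ζ)) = κ ∧
      ∀ ζ, κ.ord.cof < #(A ζ) := by
  set l := κ.ord.cof with hl
  have hκ0 : ℵ₀ ≤ κ := hκ.aleph0_le
  have hlreg : l.IsRegular := Cardinal.isRegular_cof (Cardinal.isSuccLimit_ord hκ0)
  have hl0 : ℵ₀ ≤ l := hlreg.aleph0_le
  obtain ⟨h, hhlt, hhcof⟩ : ∃ h : l.ord.ToType → Cardinal.{u}, (∀ i, h i < κ) ∧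
      ∀ c < κ, ∃ i, c ≤ h i := exists_cofinal κ
  have hI : #l.ord.ToType = l := Cardinal.mk_ord_toType l
  set ν := nuSeq l h with hν
  let m : l.ord.ToType → Cardinal.{u} := fun i => max l (max (h i) (⨆ j : Set.Iio i, ν j.1))
  have hνm : ∀ i, ν i = succ (2 ^ m i) := fun i => nuSeq_eq l h i
  have hlm : ∀ i, l ≤ m i := fun i => le_max_left _ _
  have hm0 : ∀ i, ℵ₀ ≤ m i := fun i => hl0.trans (hlm i)
  have hmν : ∀ i, 2 ^ m i < ν i := fun i => by rw [hνm]; exact lt_succ _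
  have hmν' : ∀ i, m i < ν i := fun i => (Cardinal.cantor _).trans (hmν i)
  have hνreg : ∀ i, (ν i).IsRegular := fun i => by
    rw [hνm]; exact Cardinal.isRegular_succ ((hm0 i).trans (Cardinal.cantor _).le)
  have hνle : ∀ i j, j < i → ν j ≤ m i := fun i j hji =>
    (le_ciSup (f := fun j : Set.Iio i => ν j.1) Cardinal.bddAbove_of_small ⟨j, hji⟩).trans
      ((le_max_right _ _).trans (le_max_right _ _))
  have hνmono : StrictMono ν := fun j i hji => (hνle i j hji).trans_lt (hmν' i)
  have hνκ : ∀ i, ν i < κ := by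
    intro i
    induction i using WellFoundedLT.induction with
    | ind i ih =>
      rw [hνm]
      apply hκ.isSuccLimit.succ_lt
      apply hκ.isStrongPrelimit
      refine max_lt hsing (max_lt (hhlt i) ?_)
      apply Cardinal.iSup_lt_of_lt_cof_ord
      · rw [← hl]
        exact Cardinal.mk_Iio_toType_ord_lt i
      · intro j; exact ih j.1 j.2
  -- disjoint blocks of size κ
  have hprod : #(l.ord.ToType × L) = #L := by
    rw [Cardinal.mk_prod, Cardinal.lift_id, Cardinal.lift_id, hI, hL]
    exact Cardinal.mul_eq_right hκ0 hsing.le hlreg.ne_zero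
  obtain ⟨e⟩ := Cardinal.eq.1 hprod
  let B : l.ord.ToType → Set L := fun i => Set.range fun x => e (i, x)
  have hB : ∀ i, #(B i) = κ := fun i => by
    rw [← hL]
    exact Cardinal.mk_range_eq _ fun x y hxy => by simpa using hxy
  have hBd : ∀ i j, i ≠ j → Disjoint (B i) (B j) := by
    intro i j hij
    rw [Set.disjoint_left]
    rintro _ ⟨x, rfl⟩ ⟨y, hy⟩
    apply hij
    have := e.injective hy
    simp only [Prod.mk.injEq] at this
    exact this.1.symm
  have s1 : ∀ i, ∃ A ⊆ B i, #A = ν i ∧ ∃ t, Unif A t := fun i =>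
    exists_unif (B i) (ν i) (hνreg i) (by rw [hB]; exact hκ.isStrongPrelimit (hνκ i))
  choose A1 hA1B hA1c t ht using s1
  -- first thinning
  have s2 : ∀ i, ∃ A ⊆ A1 i, #A = ν i ∧ ∃ f : L → Prop × Prop, ∀ j < i, ∀ a ∈ A1 j, ∀ b ∈ A,
      col a b = f a := by
    intro i
    let U : Set L := ⋃ j : Set.Iio i, A1 j.1
    have hU : #U ≤ m i := by
      refine (Cardinal.mk_iUnion_le _).trans ?_
      calc #(Set.Iio i) * (⨆ j : Set.Iio i, #(A1 j.1)) ≤ m i * m i := by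
            gcongr
            · exact (Cardinal.mk_Iio_toType_ord_lt i).le.trans (hlm i)
            · apply ciSup_le'
              intro j
              rw [hA1c]; exact hνle i j.1 j.2
        _ = m i := Cardinal.mul_eq_self (hm0 i)
    obtain ⟨A, hA, hAc, g, hg⟩ := thin (A1 i) (fun b (a : U) => col a.1 b)
      (by rw [hA1c]; exact hνreg i)
      (by rw [hA1c]; exact (mk_fun_le (hm0 i) hU).trans_lt (hmν i))
    classical
    refine ⟨A, hA, hAc.trans (hA1c i), fun a => if h : a ∈ U then g ⟨a, h⟩ else (True, True), ?_⟩
    intro j hj a ha b hb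
    have haU : a ∈ U := Set.mem_iUnion.2 ⟨⟨j, hj⟩, ha⟩
    simp only
    rw [dif_pos haU, ← hg b hb]
  choose A2 hA21 hA2c f hf using s2
  -- second thinning
  have s3 : ∀ i, ∃ A ⊆ A2 i, #A = ν i ∧ ∃ g : l.ord.ToType → Prop × Prop, ∀ a ∈ A,
      (fun j => f j a) = g := by
    intro i
    obtain ⟨A, hA, hAc, g, hg⟩ := thin (A2 i) (fun a j => f j a)
      (by rw [hA2c]; exact hνreg i)
      (by rw [hA2c]; exact (mk_fun_le (hm0 i) (hI.le.trans (hlm i))).trans_lt (hmν i))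
    exact ⟨A, hA, hAc.trans (hA2c i), g, hg⟩
  choose A3 hA32 hA3c g hg using s3
  have hcol : ∀ i j, i < j → ∀ a ∈ A3 i, ∀ b ∈ A3 j, col a b = g i j := by
    intro i j hij a ha b hb
    rw [hf j i hij a (hA21 i (hA32 i ha)) b (hA32 j hb)]
    exact congrFun (hg i a ha) j
  -- make the type constant
  obtain ⟨t0, ht0⟩ := Cardinal.infinite_pigeonhole (fun i => ULift.up.{u} (t i))
    (by rw [hI]; exact hl0) (by
      rw [hI, hlreg.cof_ord]
      exact (Cardinal.lt_aleph0_of_finite _).trans_le hl0)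
  obtain ⟨t0⟩ := t0
  set J := (fun i => ULift.up.{u} (t i)) ⁻¹' {ULift.up t0} with hJ
  have htJ : ∀ j ∈ J, t j = t0 := fun j hj => by simpa [hJ] using hj
  have hemb : Nonempty ((· < · : l.ord.ToType → l.ord.ToType → Prop) ↪r
      (· < · : J → J → Prop)) := by
    rw [← Ordinal.type_le_iff']
    have := Cardinal.ord_le_type (· < · : J → J → Prop)
    rw [ht0, hI] at this
    exact (Ordinal.type_toType _).le.trans this
  obtain ⟨em⟩ := hemb
  let ε : l.ord.ToType → l.ord.ToType := fun i => (em i).1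
  have hε : StrictMono ε := fun i j hij => em.map_rel_iff.2 hij
  have hεt : ∀ i, t (ε i) = t0 := fun i => htJ _ (em i).2
  have hAB : ∀ i, A3 i ⊆ B i := fun i => ((hA32 i).trans (hA21 i)).trans (hA1B i)
  have hd : ∀ i j, i ≠ j → Disjoint (A3 (ε i)) (A3 (ε j)) := fun i j hij =>
    (hBd _ _ (hε.injective.ne hij)).mono (hAB _) (hAB _)
  have hun : ∀ i, Unif (A3 (ε i)) t0 := fun i => by
    have := (ht (ε i)).mono ((hA32 _).trans (hA21 _))
    rwa [hεt] at this
  have hne : ∀ i, (A3 i).Nonempty := fun i => by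
    rw [← Set.nonempty_coe_sort, ← Cardinal.mk_ne_zero_iff, hA3c]
    exact (hνreg i).ne_zero
  have hF : ∀ i j, ∃ F : CompType, i ≠ j → ∀ a ∈ A3 (ε i), ∀ b ∈ A3 (ε j), F.rel a b := by
    intro i j
    by_cases hij : i = j
    · exact ⟨.lt, fun h => (h hij).elim⟩
    obtain ⟨P, hP⟩ : ∃ P : Prop × Prop, ∀ a ∈ A3 (ε i), ∀ b ∈ A3 (ε j), col a b = P := by
      rcases lt_or_gt_of_ne hij with h | h
      · exact ⟨_, hcol _ _ (hε h)⟩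
      · refine ⟨(g (ε j) (ε i)).swap, fun a ha b hb => ?_⟩
        rw [← hcol _ _ (hε h) b hb a ha]
        rfl
    have hle : ∀ a ∈ A3 (ε i), ∀ b ∈ A3 (ε j), ((a ≤ b) ↔ P.1) ∧ ((b ≤ a) ↔ P.2) := by
      intro a ha b hb
      rw [← hP a ha b hb]
      exact ⟨Iff.rfl, Iff.rfl⟩
    have hnn : ¬ (P.1 ∧ P.2) := by
      rintro ⟨h1, h2⟩
      obtain ⟨a, ha⟩ := hne (ε i)
      obtain ⟨b, hb⟩ := hne (ε j)
      have := le_antisymm ((hle a ha b hb).1.2 h1) ((hle a ha b hb).2.2 h2)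
      subst this
      exact Set.disjoint_left.1 (hd i j hij) ha hb
    by_cases h1 : P.1
    · refine ⟨.lt, fun _ a ha b hb => ?_⟩
      exact lt_of_le_not_ge ((hle a ha b hb).1.2 h1) fun h => hnn ⟨h1, (hle a ha b hb).2.1 h⟩
    · by_cases h2 : P.2
      · refine ⟨.gt, fun _ a ha b hb => ?_⟩
        exact lt_of_le_not_ge ((hle a ha b hb).2.2 h2) fun h => h1 ((hle a ha b hb).1.1 h)
      · refine ⟨.incomp, fun _ a ha b hb => ?_⟩
        exact ⟨fun h => h1 ((hle a ha b hb).1.1 h), fun h => h2 ((hle a ha b hb).2.1 h)⟩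
  choose F hF using hF
  have hcard : ∀ i, #(A3 (ε i)) = ν (ε i) := fun i => hA3c _
  refine ⟨fun i => A3 (ε i), fun i j hij => hd i j hij, ⟨?_, F, hF⟩, ?_, ?_, ?_⟩
  · obtain ⟨p, q⟩ := t0
    by_cases hp : p <;> by_cases hq : q <;> simp only [hp, hq] at hun
    · obtain ⟨i⟩ : Nonempty l.ord.ToType := by
        rw [← Cardinal.mk_ne_zero_iff, hI]; exact hlreg.ne_zero
      exact ((hun i).2.2.2 rfl).elim
    · exact Or.inr (Or.inl fun i => (hun i).2.1 rfl)
    · exact Or.inr (Or.inr fun i => (hun i).2.2.1 rfl)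
    · exact Or.inl fun i => (hun i).1 rfl
  · intro i j hij
    simp only [hcard]
    exact hνmono (hε hij)
  · simp only [hcard]
    apply le_antisymm
    · exact ciSup_le' fun i => (hνκ _).le
    · by_contra hcon
      rw [not_le] at hcon
      obtain ⟨i, hi⟩ := hhcof _ hcon
      have h1 : ν (ε i) ≤ ⨆ i, ν (ε i) := le_ciSup Cardinal.bddAbove_of_small i
      have h2 : ν i ≤ ν (ε i) := hνmono.monotone hε.le_apply
      have h3 : h i < ν i := ((le_max_left _ _).trans (le_max_right _ _)).trans_lt (hmν' i)
      exact ((h3.trans_le h2).trans_le (h1.trans hi)).false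
  · intro i
    simp only [hcard]
    exact (hlm _).trans_lt (hmν' _)

end Canonization

/-- Canonization: if `κ` is a singular strong limit cardinal with cofinality `λ < κ` and
`|L| = κ`, then there is a pairwise disjoint canonical family `(A_ζ)_{ζ<λ}` of subsets of
`L` whose cardinalities are strictly increasing with supremum `κ`, each of size `> λ`. -/
theorem canonization (L : Type u) [PartialOrder L] (κ : Cardinal.{u})
    (hκ : κ.IsStrongLimit) (hsing : κ.ord.cof < κ) (hL : #L = κ) :
    ∃ A : {ζ : Ordinal.{u} // ζ < (κ.ord.cof).ord} → Set L,
      Pairwise (Function.onFun Disjoint A) ∧ IsCanonical A ∧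
      StrictMono (fun ζ => #(A ζ)) ∧
      (⨆ ζ, #(A ζ)) = κ ∧
      ∀ ζ, κ.ord.cof < #(A ζ) := by
  obtain ⟨A, hd, ⟨hu, F, hF⟩, hm, hs, hl⟩ := Canonization.main L κ hκ hsing hL
  let e : {ζ : Ordinal.{u} // ζ < (κ.ord.cof).ord} ≃o (κ.ord.cof).ord.ToType :=
    Ordinal.ToType.mk
  refine ⟨fun ζ => A (e ζ), fun i j hij => hd (e.injective.ne hij), ⟨?_, fun i j => F (e i) (e j),
    fun i j hij => hF _ _ (e.injective.ne hij)⟩, fun i j hij => hm (e.strictMono hij), ?_,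
    fun ζ => hl _⟩
  · rcases hu with h | h | h
    · exact Or.inl fun i => h _
    · exact Or.inr (Or.inl fun i => h _)
    · exact Or.inr (Or.inr fun i => h _)
  · exact (e.toEquiv.iSup_comp (g := fun i => #(A i))).trans hs
end

section
/- Let L be a partial order and let Ā ⊆ L be a subset which, with the induced order, is a complete lattice (least upper bounds are taken inside Ā; they need not be least upper bounds in L). Then for every A ⊆ Ā, ν(L) ≥ ν(A), where ν(A) is computed for A with the induced order. -/
universe u v w

open Cardinal

/-- If `Ā ⊆ L` is complete as a partial order (every subset has a least upper bound inside
`Ā`), then `ν(L) ≥ ν(A)` for every `A ⊆ Ā`. -/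
theorem nu_ge_of_subset_complete (L : Type u) [PartialOrder L] (Abar : Set L)
    (hcomp : ∀ S : Set ↥Abar, ∃ a : ↥Abar, IsLUB S a)
    (A : Set L) (hA : A ⊆ Abar) :
    nu ↥A ≤ nu L := by
  classical
  have ext : ∀ f : ↥A → ↥A, ∃ g : L → L,
      Monotone f → (Monotone g ∧ ∀ a : ↥A, g a = f a) := by
    intro f
    let T : L → Set ↥Abar := fun x => {b | ∃ a : ↥A, (a : L) ≤ x ∧ (b : L) = f a}
    choose g hg using fun x => hcomp (T x)
    refine ⟨fun x => (g x : L), fun hf => ⟨?_, ?_⟩⟩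
    · intro x y hxy
      have h : g x ≤ g y := by
        apply (hg x).2
        rintro b ⟨a, hax, hb⟩
        exact (hg y).1 ⟨a, hax.trans hxy, hb⟩
      exact h
    · intro a
      have h : IsLUB (T a) ⟨f a, hA (f a).2⟩ := by
        constructor
        · rintro b ⟨c, hc, hb⟩
          change (b : L) ≤ f a
          rw [hb]
          exact hf (show c ≤ a from hc)
        · intro b hb
          exact hb ⟨a, le_refl _, rfl⟩
      exact congrArg Subtype.val ((hg a).unique h)
  choose E hE using ext
  unfold nu nu2
  apply csInf_le_csInf (OrderBot.bddBelow _)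
  · refine ⟨Order.succ #(L → L), ?_⟩
    rintro ⟨S, -, -, hS⟩
    have h1 := Cardinal.mk_set_le S
    rw [hS] at h1
    exact absurd h1 (not_le.mpr (Order.lt_succ _))
  · rintro n hn ⟨S, hm, ha, hc⟩
    apply hn
    have key : ∀ f ∈ S, ∀ f' ∈ S, E f ≤ E f' → f ≤ f' := by
      intro f hf f' hf' h a
      have h2 := h a
      rw [(hE f (hm f hf)).2, (hE f' (hm f' hf')).2] at h2
      exact h2
    refine ⟨E '' S, ?_, ?_, ?_⟩
    · rintro _ ⟨f, hf, rfl⟩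
      exact (hE f (hm f hf)).1
    · rintro _ ⟨f, hf, rfl⟩ _ ⟨f', hf', rfl⟩ hne hle
      exact ha hf hf' (fun h => hne (by rw [h])) (key f hf f' hf' hle)
    · rw [← hc]
      apply Cardinal.mk_image_eq_of_injOn
      intro f hf f' hf' h
      exact le_antisymm (key f hf f' hf' h.le) (key f' hf' f hf h.ge)
end

section
/- Let L be a partial order, let (A_i)_{i<λ} be a canonical family of pairwise disjoint subsets of L, and let A = ⋃_{i<λ} A_i. If κ_i < ν(A_i) for every i < λ, then ν(A) > ∏_{i<λ} κ_i. -/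
universe u v w

open Cardinal

/-- A cardinal below `nu2` is realised by an antichain of monotone functions. -/
theorem exists_of_lt_nu {L : Type u} [PartialOrder L] {k : Cardinal.{u}} (h : k < nu L) :
    ∃ S : Set (L → L), (∀ f ∈ S, Monotone f) ∧ IsAntichain (· ≤ ·) S ∧ #S = k := by
  by_contra hc
  exact absurd (csInf_le' (s := {n : Cardinal.{u} |
    ¬ ∃ S : Set (L → L), (∀ f ∈ S, Monotone f) ∧ IsAntichain (· ≤ ·) S ∧ #S = n}) hc)
    (not_le.2 h)

/-- An antichain of monotone functions has size below `nu`. -/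
theorem lt_nu_of_antichain {L : Type u} [PartialOrder L] (S : Set (L → L))
    (hS : ∀ f ∈ S, Monotone f) (hA : IsAntichain (· ≤ ·) S) : #S < nu L := by
  by_contra hc
  have hne : {n : Cardinal.{u} |
      ¬ ∃ S : Set (L → L), (∀ f ∈ S, Monotone f) ∧ IsAntichain (· ≤ ·) S ∧ #S = n}.Nonempty := by
    refine ⟨Order.succ #(L → L), ?_⟩
    rintro ⟨T, -, -, hT⟩
    have h1 := Cardinal.mk_set_le T
    rw [hT] at h1
    exact absurd h1 (not_le.2 (Order.lt_succ _))
  have hmem := csInf_mem hne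
  obtain ⟨T, hTS, hT⟩ := Cardinal.le_mk_iff_exists_subset.1 (not_lt.1 hc)
  exact hmem ⟨T, fun f hf => hS f (hTS hf), hA.subset hTS, hT⟩

/-- Independence lemma, part 4: for a pairwise disjoint canonical family `(A_i)_{i<λ}`,
if `κ_i < ν(A_i)` for all `i`, then `ν(⋃ A_i) > ∏ κ_i`. -/
theorem independence_nu_prod (L : Type u) [PartialOrder L] {ι : Type u} (A : ι → Set L)
    (hdisj : Pairwise (Function.onFun Disjoint A)) (hcan : IsCanonical A)
    (κ : ι → Cardinal.{u}) (hκ : ∀ i, κ i < nu ↥(A i)) :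
    Cardinal.prod κ < nu ↥(⋃ i, A i) := by
  obtain ⟨-, F, hF⟩ := hcan
  choose S hmono hanti hcard using fun i => exists_of_lt_nu (hκ i)
  choose idx hidx using fun x : ↥(⋃ i, A i) => Set.mem_iUnion.1 x.2
  have huniq : ∀ (i : ι) (x : ↥(⋃ i, A i)), x.1 ∈ A i → idx x = i := by
    intro i x hx
    by_contra hne
    exact Set.disjoint_left.1 (hdisj hne) (hidx x) hx
  let glue : ((i : ι) → S i) → (↥(⋃ i, A i) → ↥(⋃ i, A i)) := fun f x =>
    ⟨((f (idx x)).1 ⟨x.1, hidx x⟩).1, Set.mem_iUnion.2 ⟨idx x, Subtype.coe_prop _⟩⟩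
  have hglue : ∀ f i x (hx : x.1 ∈ A i), (glue f x).1 = ((f i).1 ⟨x.1, hx⟩).1 := by
    intro f i x hx
    obtain rfl := huniq i x hx
    rfl
  have hle : ∀ f g, glue f ≤ glue g → ∀ i, (f i).1 ≤ (g i).1 := by
    intro f g hfg i x
    have hx := hfg ⟨x.1, Set.mem_iUnion.2 ⟨i, x.2⟩⟩
    rw [← Subtype.coe_le_coe, hglue f i _ x.2, hglue g i _ x.2] at hx
    exact hx
  have heq : ∀ f g, glue f ≤ glue g → f = g := by
    intro f g hfg
    funext i
    by_contra hne
    exact hanti i (f i).2 (g i).2 (fun h => hne (Subtype.ext h)) (hle f g hfg i)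
  have hinj : Function.Injective glue := fun f g h => heq f g h.le
  have hprod : #(Set.range glue) = Cardinal.prod κ := by
    rw [Cardinal.mk_range_eq _ hinj, Cardinal.mk_pi]
    congr 1
    funext i
    exact hcard i
  rw [← hprod]
  apply lt_nu_of_antichain
  · rintro _ ⟨f, rfl⟩ x y hxy
    rw [← Subtype.coe_le_coe]
    by_cases h : idx x = idx y
    · have hx : x.1 ∈ A (idx y) := h ▸ hidx x
      rw [hglue f _ x hx, hglue f _ y (hidx y)]
      exact hmono (idx y) _ (f (idx y)).2 (show (⟨x.1, hx⟩ : A (idx y)) ≤ ⟨y.1, hidx y⟩ from hxy)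
    · have h1 := hF _ _ h x.1 (hidx x) y.1 (hidx y)
      have h2 := hF _ _ h (glue f x).1 (Subtype.coe_prop _) (glue f y).1 (Subtype.coe_prop _)
      have hxy' : x.1 ≤ y.1 := hxy
      cases hc : F (idx x) (idx y) with
      | lt => rw [hc] at h2; exact le_of_lt h2
      | gt => rw [hc] at h1; exact absurd hxy' (not_le_of_gt h1)
      | incomp => rw [hc] at h1; exact absurd hxy' h1.1
  · rintro _ ⟨f, rfl⟩ _ ⟨g, rfl⟩ hne hfg
    exact hne (congrArg glue (heq f g hfg))
end

section
/- Let L and B be partial orders, let (A_i)_{i<λ} be a family of pairwise disjoint subsets of L whose union A = ⋃_{i<λ} A_i is an antichain in L. If κ_i < ν(A_i, B) for every i < λ, then ν(A, B) > ∏_{i<λ} κ_i. -/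
universe u v w

open Cardinal

theorem lt_nu2_iff_exists {L₁ L₂ : Type u} [PartialOrder L₁] [PartialOrder L₂]
    (n : Cardinal.{u}) : n < nu2 L₁ L₂ ↔
    ∃ S : Set (L₁ → L₂), (∀ f ∈ S, Monotone f) ∧ IsAntichain (· ≤ ·) S ∧ #S = n := by
  constructor
  · intro h
    by_contra hn
    exact absurd (csInf_le' (s := {n : Cardinal.{u} |
      ¬ ∃ S : Set (L₁ → L₂), (∀ f ∈ S, Monotone f) ∧ IsAntichain (· ≤ ·) S ∧ #S = n}) hn)
      (not_le.mpr h)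
  · rintro ⟨S, hm, ha, hc⟩
    have hne : ({n : Cardinal.{u} | ¬ ∃ S : Set (L₁ → L₂), (∀ f ∈ S, Monotone f) ∧
        IsAntichain (· ≤ ·) S ∧ #S = n}).Nonempty := by
      refine ⟨Order.succ #(L₁ → L₂), ?_⟩
      rintro ⟨T, -, -, hT⟩
      have h1 := Cardinal.mk_set_le T
      rw [hT] at h1
      exact absurd h1 (not_le.mpr (Order.lt_succ _))
    have hmem := csInf_mem hne
    by_contra hlt
    have hle : nu2 L₁ L₂ ≤ #S := by rw [hc]; exact not_lt.mp hlt
    obtain ⟨T, hTS, hT⟩ := Cardinal.le_mk_iff_exists_subset.mp hle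
    exact hmem ⟨T, fun f hf => hm f (hTS hf), ha.subset hTS, hT⟩

/-- Independence lemma, part 5: for a pairwise disjoint family `(A_i)_{i<λ}` whose union
is an antichain, if `κ_i < ν(A_i, B)` for all `i`, then `ν(⋃ A_i, B) > ∏ κ_i`. -/
theorem independence_nu2_prod (L : Type u) (B : Type u) [PartialOrder L] [PartialOrder B]
    {ι : Type u} (A : ι → Set L) (hdisj : Pairwise (Function.onFun Disjoint A))
    (hanti : IsAntichain (· ≤ ·) (⋃ i, A i))
    (κ : ι → Cardinal.{u}) (hκ : ∀ i, κ i < nu2 (↥(A i)) B) :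
    Cardinal.prod κ < nu2 (↥(⋃ i, A i)) B := by
  choose S hm ha hc using fun i => (lt_nu2_iff_exists (κ i)).mp (hκ i)
  rw [lt_nu2_iff_exists]
  have hidx : ∀ x : ↥(⋃ i, A i), ∃ i, x.1 ∈ A i := fun x => Set.mem_iUnion.mp x.2
  choose idx hx using hidx
  let g : (∀ i, ↥(S i)) → (↥(⋃ i, A i) → B) := fun s x => (s (idx x)).1 ⟨x.1, hx x⟩
  have hg : ∀ s i (a : ↥(A i)), g s ⟨a.1, Set.mem_iUnion.mpr ⟨i, a.2⟩⟩ = (s i).1 a := by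
    intro s i a
    have key : ∀ j (hj : a.1 ∈ A j), (s j).1 ⟨a.1, hj⟩ = (s i).1 a := by
      intro j hj
      have hji : j = i := by
        by_contra hne
        exact Set.disjoint_left.mp (hdisj hne) hj a.2
      subst hji
      rfl
    exact key _ _
  have hle : ∀ s t, g s ≤ g t → s = t := by
    intro s t hst
    funext i
    have h1 : (s i).1 ≤ (t i).1 := by
      intro a
      rw [← hg s i a, ← hg t i a]
      exact hst _
    exact Subtype.ext ((ha i).eq (s i).2 (t i).2 h1)
  refine ⟨Set.range g, ?_, ?_, ?_⟩
  · intro f _ x y hxy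
    have : x = y := Subtype.ext (hanti.eq x.2 y.2 hxy)
    rw [this]
  · rintro _ ⟨s, rfl⟩ _ ⟨t, rfl⟩ hne hst
    exact hne (congrArg g (hle s t hst))
  · rw [Cardinal.mk_range_eq g (fun s t h => hle s t h.le), Cardinal.mk_pi]
    exact congrArg Cardinal.prod (funext hc)
end

section
/- Let L be a partial order and A ⊆ L a uniform subset with |A| = κ ≥ ℵ₀. Then ν(A) > 2^κ; that is, there exists a family of 2^κ pairwise incomparable monotone functions from A to A (with the induced order). -/
universe u v w

open Cardinal

/-- The antichain statement for a poset equipped with a successor-like function. -/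
theorem exists_antichain_of_succ (T : Type u) [PartialOrder T] (hT : ℵ₀ ≤ #T) (s : T → T)
    (h1 : ∀ x, x ≤ s x) (h2 : ∀ x z, x < z → s x ≤ z) (h3 : {x | s x = x}.Subsingleton) :
    ∃ S : Set (T → T), (∀ f ∈ S, Monotone f) ∧ IsAntichain (· ≤ ·) S ∧ #S = 2 ^ #T := by
  classical
  have : Infinite T := Cardinal.infinite_iff.2 hT
  have hB : #(↥({x | s x = x}ᶜ : Set T)) = #T := by
    apply Cardinal.mk_compl_of_infinite
    exact lt_of_le_of_lt (Cardinal.mk_le_one_iff_set_subsingleton.2 h3)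
      (lt_of_lt_of_le Cardinal.one_lt_aleph0 hT)
  have he : #(T ⊕ T) = #(↥({x | s x = x}ᶜ : Set T)) := by
    rw [hB, Cardinal.mk_sum, Cardinal.lift_id, Cardinal.add_eq_self hT]
  obtain ⟨e⟩ := Cardinal.eq.1 he
  let X : Set T → Set T := fun Z =>
    {x | ∃ t, (t ∈ Z ∧ x = e (Sum.inl t)) ∨ (t ∉ Z ∧ x = e (Sum.inr t))}
  have hl : ∀ Z t, ((e (Sum.inl t) : T) ∈ X Z ↔ t ∈ Z) := by
    intro Z t
    simp only [X, Set.mem_setOf_eq, Subtype.coe_inj, e.injective.eq_iff]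
    simp
  have hr : ∀ Z t, ((e (Sum.inr t) : T) ∈ X Z ↔ t ∉ Z) := by
    intro Z t
    simp only [X, Set.mem_setOf_eq, Subtype.coe_inj, e.injective.eq_iff]
    simp
  let F : Set T → T → T := fun Z x => if x ∈ X Z then s x else x
  have hF : ∀ Z W, F Z ≤ F W → ∀ b : ↥({x | s x = x}ᶜ : Set T), (b : T) ∈ X Z → (b : T) ∈ X W := by
    intro Z W h b hb
    by_contra hn
    have := h b
    simp only [F, if_pos hb, if_neg hn] at this
    exact b.2 (le_antisymm this (h1 _))
  have hinj : ∀ Z W, F Z ≤ F W → Z = W := by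
    intro Z W h
    ext t
    constructor
    · intro ht
      exact (hl W t).1 (hF Z W h _ ((hl Z t).2 ht))
    · intro ht
      by_contra hn
      exact (hr W t).1 (hF Z W h _ ((hr Z t).2 hn)) ht
  refine ⟨Set.range F, ?_, ?_, ?_⟩
  · rintro _ ⟨Z, rfl⟩ x y hxy
    rcases hxy.eq_or_lt with rfl | hlt
    · exact le_rfl
    · have ha : F Z x ≤ y := by
        simp only [F]
        split_ifs
        · exact h2 x y hlt
        · exact hxy
      have hb : y ≤ F Z y := by
        simp only [F]
        split_ifs
        · exact h1 y
        · exact le_rfl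
      exact ha.trans hb
  · rintro _ ⟨Z, rfl⟩ _ ⟨W, rfl⟩ hne hle
    exact hne (congrArg F (hinj Z W hle))
  · rw [Cardinal.mk_range_eq F (fun Z W h => hinj Z W h.le), Cardinal.mk_set]

/-- The antichain statement for well-ordered chains. -/
theorem exists_antichain_of_wf (T : Type u) [PartialOrder T] (hT : ℵ₀ ≤ #T)
    (hc : ∀ x y : T, x ≤ y ∨ y ≤ x) (hw : WellFounded (fun x y : T => x < y)) :
    ∃ S : Set (T → T), (∀ f ∈ S, Monotone f) ∧ IsAntichain (· ≤ ·) S ∧ #S = 2 ^ #T := by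
  have hs : ∀ x : T, ∃ y, x ≤ y ∧ (∀ z, x < z → y ≤ z) ∧ (∀ z, x < z → y ≠ x) := by
    intro x
    by_cases h : ∃ z, x < z
    · obtain ⟨m, hm, hmin⟩ := hw.has_min {z | x < z} h
      refine ⟨m, le_of_lt hm, fun z hz => ?_, fun z _ => ne_of_gt hm⟩
      rcases hc m z with h' | h'
      · exact h'
      · rcases h'.eq_or_lt with h'' | h''
        · exact h''.ge
        · exact absurd h'' (hmin z hz)
    · push Not at h
      exact ⟨x, le_rfl, fun z hz => absurd hz (h z), fun z hz => absurd hz (h z)⟩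
  choose s h1 h2 h3 using hs
  refine exists_antichain_of_succ T hT s h1 h2 ?_
  intro x hx y hy
  by_contra hne
  rcases hc x y with h | h
  · exact h3 x y (lt_of_le_of_ne h hne) hx
  · exact h3 y x (lt_of_le_of_ne h (Ne.symm hne)) hy

/-- If `A ⊆ L` is uniform with `|A| = κ ≥ ℵ₀`, then `ν(A) > 2^κ`: there are `2^κ` pairwise
incomparable monotone functions from `A` to `A`. -/
theorem nu_uniform_gt_two_pow (L : Type u) [PartialOrder L] (A : Set L) (hA : IsUniform A)
    (κ : Cardinal.{u}) (hκ : ℵ₀ ≤ κ) (hcard : #↥A = κ) :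
    2 ^ κ < nu ↥A ∧
      ∃ S : Set (↥A → ↥A), (∀ f ∈ S, Monotone f) ∧ IsAntichain (· ≤ ·) S ∧ #S = 2 ^ κ := by
  have hinf : ℵ₀ ≤ #↥A := hcard ▸ hκ
  have hex : ∃ S : Set (↥A → ↥A),
      (∀ f ∈ S, Monotone f) ∧ IsAntichain (· ≤ ·) S ∧ #S = 2 ^ κ := by
    rw [← hcard]
    rcases hA with hA | ⟨hc, hw⟩ | ⟨hc, hw⟩
    · have heq : ∀ x y : ↥A, x ≤ y → x = y := fun x y h => Subtype.ext (hA.eq x.2 y.2 h)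
      refine ⟨Set.univ, ?_, ?_, ?_⟩
      · intro f _ x y h
        rw [heq x y h]
      · intro f _ g _ hne hle
        exact hne (funext fun x => heq _ _ (hle x))
      · rw [Cardinal.mk_univ, ← Cardinal.power_def, Cardinal.power_self_eq hinf]
    · exact exists_antichain_of_wf ↥A hinf (fun x y => hc.total x.2 y.2) hw
    · obtain ⟨S, hm, ha, hS⟩ := exists_antichain_of_wf (↥A)ᵒᵈ hinf
        (fun x y => hc.total (OrderDual.ofDual y).2 (OrderDual.ofDual x).2) hw
      refine ⟨(S : Set (↥A → ↥A)), ?_, ?_, hS⟩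
      · intro f hf x y h
        exact hm f hf (show (OrderDual.toDual y) ≤ OrderDual.toDual x from h)
      · intro f hf g hg hne hle
        exact ha hg hf (Ne.symm hne) (fun x => hle x)
  refine ⟨?_, hex⟩
  obtain ⟨S, hm, ha, hS⟩ := hex
  have hne : {n : Cardinal.{u} | ¬ ∃ S : Set (↥A → ↥A),
      (∀ f ∈ S, Monotone f) ∧ IsAntichain (· ≤ ·) S ∧ #S = n}.Nonempty := by
    refine ⟨2 ^ #(↥A → ↥A), ?_⟩
    rintro ⟨S, -, -, hS⟩
    exact absurd (Cardinal.mk_set_le S) (not_le.2 (hS ▸ Cardinal.cantor _))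
  have hmem := csInf_mem hne
  by_contra hlt
  have hle : nu ↥A ≤ #S := hS ▸ not_lt.1 hlt
  obtain ⟨S', hsub, hS'⟩ := Cardinal.le_mk_iff_exists_subset.1 hle
  exact hmem ⟨S', fun f hf => hm f (hsub hf), ha.subset hsub, hS'⟩
end

section
/- Let L be a bounded partial order (i.e., L has a least element 0 and a greatest element 1), n ≥ 1, and κ an infinite cardinal. If κ < μₙ(L), then 2^κ < νₙ(L). In particular, κ < μ_∞(L) implies 2^κ < ν_∞(L). -/
universe u v w

open Cardinal

/-- A family of monotone functions indexed by subsets of a large set and reflecting inclusion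
yields many incomparable monotone functions. -/
theorem aux_lt_nu2 {P L T : Type u} [PartialOrder P] [PartialOrder L] (κ : Cardinal.{u})
    (hκ : ℵ₀ ≤ κ) (hT : κ ≤ #T) (F : Set T → P → L) (hm : ∀ X, Monotone (F X))
    (hF : ∀ X Y, F X ≤ F Y → X ⊆ Y) : 2 ^ κ < nu2 P L := by
  unfold nu2
  have hne : {n : Cardinal.{u} | ¬ ∃ S : Set (P → L), (∀ f ∈ S, Monotone f) ∧
      IsAntichain (· ≤ ·) S ∧ #S = n}.Nonempty := by
    refine ⟨Order.succ #(P → L), ?_⟩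
    rintro ⟨S, -, -, hS⟩
    have h1 : #S ≤ #(P → L) := Cardinal.mk_set_le S
    rw [hS] at h1
    exact absurd h1 (not_le.2 (Order.lt_succ _))
  by_contra hcon
  rw [not_lt] at hcon
  refine (csInf_mem hne) ?_
  -- a big antichain
  have hT' : ℵ₀ ≤ #T := hκ.trans hT
  obtain ⟨e⟩ : Nonempty (T ⊕ T ≃ T) := by
    rw [← Cardinal.eq, Cardinal.mk_sum, Cardinal.lift_id, Cardinal.add_eq_self hT']
  let D : Set T → Set T := fun X => e '' (Sum.inl '' X ∪ Sum.inr '' Xᶜ)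
  have hD : ∀ X Y, D X ⊆ D Y → X = Y := by
    intro X Y h
    have h2 := (Set.image_subset_image_iff e.injective).1 h
    ext t
    constructor
    · intro ht
      have := h2 (Or.inl ⟨t, ht, rfl⟩)
      simpa using this
    · intro ht
      by_contra htX
      have := h2 (Or.inr ⟨t, htX, rfl⟩)
      simp at this
      exact this ht
  let G : Set T → P → L := fun X => F (D X)
  have hG : ∀ X Y, G X ≤ G Y → X = Y := fun X Y h => hD X Y (hF _ _ h)
  have hGi : Function.Injective G := fun X Y h => hG X Y h.le
  have hcard : 2 ^ κ ≤ #(Set.range G) := by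
    rw [Cardinal.mk_range_eq G hGi, Cardinal.mk_set]
    exact Cardinal.power_le_power_left two_ne_zero hT
  obtain ⟨S, hS, hSc⟩ := Cardinal.le_mk_iff_exists_subset.1 (hcon.trans hcard)
  refine ⟨S, ?_, ?_, hSc⟩
  · intro f hf
    obtain ⟨X, rfl⟩ := hS hf
    exact hm _
  · intro f hf g hg hne h
    obtain ⟨X, rfl⟩ := hS hf
    obtain ⟨Y, rfl⟩ := hS hg
    exact hne (congrArg G (hG X Y h))

/-- Functions from a set all of whose nonempty subsets have a least element. -/
theorem aux_chain {L : Type u} [PartialOrder L] [OrderTop L] (B : Set L)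
    (hB : ∀ S ⊆ B, S.Nonempty → ∃ m ∈ S, ∀ b ∈ S, m ≤ b) :
    ∃ F : Set ↥(B \ {⊤}) → L → L, (∀ X, Monotone (F X)) ∧ ∀ X Y, F X ≤ F Y → X ⊆ Y := by
  classical
  have key : ∀ S : Set L, ∃ m : L, (∀ b ∈ S ∩ B, m ≤ b) ∧ (m ∈ S ∩ B ∨ m = ⊤) := by
    intro S
    by_cases h : (S ∩ B).Nonempty
    · obtain ⟨m, hm, hm'⟩ := hB (S ∩ B) Set.inter_subset_right h
      exact ⟨m, hm', Or.inl hm⟩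
    · exact ⟨⊤, fun b hb => absurd ⟨b, hb⟩ h, Or.inr rfl⟩
  choose m hm1 hm2 using key
  let p : L → L := fun x => m {b | x ≤ b}
  let s : L → L := fun x => m {b | x < b}
  have hp : Monotone p := by
    intro x y hxy
    rcases hm2 {b | y ≤ b} with h | h
    · exact hm1 {b | x ≤ b} _ ⟨hxy.trans h.1, h.2⟩
    · exact le_top.trans_eq h.symm
  have hs : ∀ x, x ≤ s x := by
    intro x
    rcases hm2 {b | x < b} with h | h
    · exact h.1.le
    · exact le_top.trans_eq h.symm
  have hs' : ∀ x, x ≠ ⊤ → x < s x := by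
    intro x hx
    rcases hm2 {b | x < b} with h | h
    · exact h.1
    · exact (lt_top_iff_ne_top.2 hx).trans_eq h.symm
  have hsp : ∀ x y, x < p y → s x ≤ p y := by
    intro x y hxy
    rcases hm2 {b | y ≤ b} with h | h
    · exact hm1 {b | x < b} _ ⟨hxy, h.2⟩
    · exact le_top.trans_eq h.symm
  have hpb : ∀ b ∈ B, p b = b := by
    intro b hb
    apply le_antisymm
    · exact hm1 {c | b ≤ c} b ⟨le_rfl, hb⟩
    · rcases hm2 {c | b ≤ c} with h | h
      · exact h.1
      · exact le_top.trans_eq h.symm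
  refine ⟨fun X x => if p x ∈ Subtype.val '' X then s (p x) else p x, ?_, ?_⟩
  · intro X x y hxy
    rcases (hp hxy).eq_or_lt with h | h
    · simp only [h]; exact le_rfl
    · calc _ ≤ s (p x) := by
            dsimp only; split_ifs
            · exact le_rfl
            · exact hs _
        _ ≤ p y := hsp _ _ h
        _ ≤ _ := by
            dsimp only; split_ifs
            · exact hs _
            · exact le_rfl
  · intro X Y h b hb
    have hb2 := h b.1
    by_contra hbY
    have hX : b.1 ∈ Subtype.val '' X := ⟨b, hb, rfl⟩
    have hY : b.1 ∉ Subtype.val '' Y := by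
      rintro ⟨c, hc, hcb⟩
      exact hbY (Subtype.ext hcb ▸ hc)
    simp only [hpb b.1 b.2.1, if_pos hX, if_neg hY] at hb2
    exact absurd hb2 (not_le_of_gt (hs' _ b.2.2))

theorem aux_diff {L : Type u} (B : Set L) (t : L) (κ : Cardinal.{u}) (hκ : ℵ₀ ≤ κ)
    (hB : κ ≤ #B) : κ ≤ #↥(B \ {t}) := by
  by_contra h
  rw [not_le] at h
  have h1 : #B ≤ #↥(B \ {t}) + 1 := by
    refine (Cardinal.mk_le_mk_of_subset ?_).trans (Cardinal.mk_insert_le (a := t))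
    intro x hx
    by_cases hxt : x = t
    · exact Or.inl hxt
    · exact Or.inr ⟨hx, hxt⟩
  exact absurd (hB.trans h1)
    (not_le_of_gt (Cardinal.add_lt_of_lt hκ h (Cardinal.one_lt_aleph0.trans_le hκ)))

theorem aux_proj {L : Type u} (n : ℕ) (A : Set (Fin n → L)) (κ : Cardinal.{u}) (hκ : ℵ₀ ≤ κ)
    (hA : #A = κ) : ∃ i, κ ≤ #↥((fun a : Fin n → L => a i) '' A) := by
  by_contra! h
  let g : A → (∀ i, ULift.{u} ↥((fun a : Fin n → L => a i) '' A)) :=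
    fun a i => ⟨⟨a.1 i, a.1, a.2, rfl⟩⟩
  have hg : Function.Injective g := by
    intro a b hab
    ext i
    have := congrFun hab i
    exact congrArg (fun z => z.down.1) this
  have h1 := Cardinal.mk_le_of_injective hg
  rw [Cardinal.mk_pi, Cardinal.prod_eq_of_fintype, hA] at h1
  refine absurd h1 (not_le_of_gt ?_)
  simp only [Cardinal.mk_uLift, Cardinal.lift_id, Cardinal.lift_uzero]
  refine Finset.prod_induction _ (fun c => c < κ) ?_ ?_ ?_
  · intro a b ha hb
    exact Cardinal.mul_lt_of_lt hκ ha hb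
  · exact Cardinal.one_lt_aleph0.trans_le hκ
  · intro i _
    exact h i

theorem aux_well {P : Type u} [PartialOrder P] {A : Set P} (hA : IsWellChain A)
    (S : Set P) (hS : S ⊆ A) (hne : S.Nonempty) : ∃ m ∈ S, ∀ b ∈ S, m ≤ b := by
  obtain ⟨b, hb⟩ := hne
  obtain ⟨m, hm, hmin⟩ := WellFounded.has_min hA.2 {a : A | a.1 ∈ S} ⟨⟨b, hS hb⟩, hb⟩
  refine ⟨m.1, hm, fun c hc => ?_⟩
  rcases hA.1.total m.2 (hS hc) with h | h
  · exact h
  · rcases h.eq_or_lt with h | h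
    · exact h.ge
    · exact absurd h (hmin ⟨c, hS hc⟩ hc)

theorem aux_cowell {P : Type u} [PartialOrder P] {A : Set P} (hA : IsCoWellChain A)
    (S : Set P) (hS : S ⊆ A) (hne : S.Nonempty) : ∃ m ∈ S, ∀ b ∈ S, b ≤ m := by
  obtain ⟨b, hb⟩ := hne
  obtain ⟨m, hm, hmin⟩ := WellFounded.has_min hA.2 {a : A | a.1 ∈ S} ⟨⟨b, hS hb⟩, hb⟩
  refine ⟨m.1, hm, fun c hc => ?_⟩
  rcases hA.1.total m.2 (hS hc) with h | h
  · rcases h.eq_or_lt with h | h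
    · exact h.ge
    · exact absurd h (hmin ⟨c, hS hc⟩ hc)
  · exact h

theorem aux_main (L : Type u) [PartialOrder L] [BoundedOrder L]
    (n : ℕ) (κ : Cardinal.{u}) (hκ : ℵ₀ ≤ κ)
    (h : κ < mu (Fin n → L)) : 2 ^ κ < nu2 (Fin n → L) L := by
  classical
  obtain ⟨A, hA, hAc⟩ := not_not.1 (notMem_of_lt_csInf' h)
  rcases hA with hA | hA | hA
  · have hlt : (⊥ : L) < ⊤ := by
      by_contra hcon
      have hbt : (⊥ : L) = ⊤ := by
        by_contra hne
        exact hcon (lt_of_le_of_ne bot_le hne)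
      have : Subsingleton L := subsingleton_of_bot_eq_top hbt
      have h1 : #A ≤ 1 := Cardinal.le_one_iff_subsingleton.2 inferInstance
      rw [hAc] at h1
      exact absurd (hκ.trans h1) (not_le_of_gt Cardinal.one_lt_aleph0)
    refine aux_lt_nu2 κ hκ hAc.ge
      (fun (X : Set A) x => if ∃ a ∈ X, a.1 ≤ x then (⊤ : L) else ⊥) ?_ ?_
    · intro X x y hxy
      by_cases hx : ∃ a ∈ X, a.1 ≤ x
      · have hy : ∃ a ∈ X, a.1 ≤ y := by
          obtain ⟨a, ha, hax⟩ := hx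
          exact ⟨a, ha, hax.trans hxy⟩
        simp only [if_pos hx, if_pos hy]; exact le_rfl
      · simp only [if_neg hx]; exact bot_le
    · intro X Y hXY a ha
      have h2 := hXY a.1
      have hx : ∃ b ∈ X, b.1 ≤ a.1 := ⟨a, ha, le_rfl⟩
      by_cases hy : ∃ b ∈ Y, b.1 ≤ a.1
      · obtain ⟨b, hb, hba⟩ := hy
        have : b = a := Subtype.ext (hA.eq b.2 a.2 hba)
        exact this ▸ hb
      · simp only [if_pos hx, if_neg hy] at h2
        exact absurd h2 (not_le_of_gt hlt)
  · obtain ⟨i, hi⟩ := aux_proj n A κ hκ hAc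
    obtain ⟨F, hF1, hF2⟩ := aux_chain ((fun a : Fin n → L => a i) '' A) (by
      intro S hS hne
      obtain ⟨b, hb⟩ := hne
      obtain ⟨a, ha, hab⟩ := hS hb
      obtain ⟨m, ⟨hmA, hmS⟩, hmin⟩ := aux_well hA
        {a | a ∈ A ∧ a i ∈ S} (fun _ h => h.1) ⟨a, ha, by simpa [hab] using hb⟩
      refine ⟨m i, hmS, fun c hc => ?_⟩
      obtain ⟨d, hd, rfl⟩ := hS hc
      exact hmin d ⟨hd, hc⟩ i)
    refine aux_lt_nu2 κ hκ (aux_diff _ ⊤ κ hκ hi) (fun X x => F X (x i)) ?_ ?_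
    · intro X x y hxy
      exact hF1 X (hxy i)
    · intro X Y hXY
      exact hF2 X Y (fun x => hXY (fun _ => x))
  · obtain ⟨i, hi⟩ := aux_proj n A κ hκ hAc
    obtain ⟨F, hF1, hF2⟩ := aux_chain (L := Lᵒᵈ)
      (OrderDual.ofDual ⁻¹' ((fun a : Fin n → L => a i) '' A)) (by
      intro S hS hne
      obtain ⟨b, hb⟩ := hne
      obtain ⟨a, ha, hab⟩ := hS hb
      obtain ⟨m, ⟨hmA, hmS⟩, hmin⟩ := aux_cowell hA
        {a | a ∈ A ∧ OrderDual.toDual (a i) ∈ S} (fun _ h => h.1)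
        ⟨a, ha, by
          have : OrderDual.toDual (a i) = b := congrArg OrderDual.toDual hab
          rw [this]; exact hb⟩
      refine ⟨OrderDual.toDual (m i), hmS, fun c hc => ?_⟩
      obtain ⟨d, hd, hdc⟩ := hS hc
      have hdc' : OrderDual.toDual (d i) = c := congrArg OrderDual.toDual hdc
      subst hdc'
      exact OrderDual.toDual_le_toDual.2 (hmin d ⟨hd, hc⟩ i))
    refine aux_lt_nu2 κ hκ (aux_diff (L := Lᵒᵈ) _ ⊤ κ hκ hi)
      (fun X x => OrderDual.ofDual (F Xᶜ (OrderDual.toDual (x i)))) ?_ ?_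
    · intro X x y hxy
      exact hF1 Xᶜ (OrderDual.toDual_le_toDual.2 (hxy i))
    · intro X Y hXY
      exact Set.compl_subset_compl.1 (hF2 Yᶜ Xᶜ (fun x => hXY (fun _ => OrderDual.ofDual x)))

theorem mu_n_lt_imp_two_pow_lt_nu_n (L : Type u) [PartialOrder L] [BoundedOrder L]
    (n : ℕ) (hn : 1 ≤ n) (κ : Cardinal.{u}) (hκ : ℵ₀ ≤ κ) :
    (κ < mu (Fin n → L) → 2 ^ κ < nu2 (Fin n → L) L) ∧
    (κ < muInf L → 2 ^ κ < nuInf L) := by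
  refine ⟨aux_main L n κ hκ, fun h => ?_⟩
  obtain ⟨k, hk⟩ := exists_lt_of_lt_ciSup h
  exact (aux_main L (k + 1) κ hκ hk).trans_le
    (le_ciSup (f := fun n : ℕ => nu2 (Fin (n + 1) → L) L) (Cardinal.bddAbove_of_small) k)
end
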